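/- arXiv:1707.08210 — 2 statements merged into one kernel-verified Lean document; each statement's English description precedes it below -/
import Mathlib

section
/- Let ε₁ = (√3·α₁/2)³, where α₁ is the smallest modulus of a zero of U₋ on the open ray arg z = π/3, and fix ε with 0 < ε < ε₁. Then the set of eigenvalues of the model operator T(ε) is the range of a strictly increasing sequence (λ_k)_{k≥1} of positive real numbers tending to +∞, and λ_k·ε/(πk/2)² → 1 as k → ∞. -/
open Complex MeasureTheory Real

noncomputable section

/-- `w` is an entire solution of the Airy equation `w'' = z·w`
with prescribed (real) values of `w` and `w'` at the origin. -/
def IsAiry (w : ℂ → ℂ) (w0 w0' : ℝ) : Prop :=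
  Differentiable ℂ w ∧ Differentiable ℂ (deriv w) ∧
  (∀ z : ℂ, deriv (deriv w) z = z * w z) ∧
  w 0 = (w0 : ℂ) ∧ deriv w 0 = (w0' : ℂ)

/-- `Ai` is the standard Airy function of the first kind. -/
def IsAiryAi (Ai : ℂ → ℂ) : Prop :=
  IsAiry Ai ((3 : ℝ) ^ (-(2 : ℝ)/3) / Real.Gamma (2/3))
    (-((3 : ℝ) ^ (-(1 : ℝ)/3)) / Real.Gamma (1/3))

/-- `Bi` is the standard Airy function of the second kind. -/
def IsAiryBi (Bi : ℂ → ℂ) : Prop :=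
  IsAiry Bi ((3 : ℝ) ^ (-(1 : ℝ)/6) / Real.Gamma (2/3))
    ((3 : ℝ) ^ ((1 : ℝ)/6) / Real.Gamma (1/3))

/-- `U₋ = -√3·Ai + Bi`. -/
def Uminus (Ai Bi : ℂ → ℂ) : ℂ → ℂ := fun z => -(Real.sqrt 3 : ℂ) * Ai z + Bi z

/-- `U₊ = √3·Ai + Bi`. -/
def Uplus (Ai Bi : ℂ → ℂ) : ℂ → ℂ := fun z => (Real.sqrt 3 : ℂ) * Ai z + Bi z

/-- The moduli of the zeros of `U` on the open ray `arg z = π/3`. -/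
def rayZeroModuli (U : ℂ → ℂ) : Set ℝ :=
  {r : ℝ | 0 < r ∧ U ((r : ℂ) * Complex.exp ((π/3 : ℝ) * Complex.I)) = 0}

/-- `lam` is an eigenvalue of the model operator `T(ε) y = -ε⁻¹ y'' + i x y`
with Dirichlet boundary conditions on `[-1,1]`. -/
def IsModelEigenvalue (ε : ℝ) (lam : ℂ) : Prop :=
  ∃ y : ℝ → ℂ, ContDiff ℝ 2 y ∧
    (∃ x ∈ Set.Icc (-1 : ℝ) 1, y x ≠ 0) ∧
    (∀ x ∈ Set.Ioo (-1 : ℝ) 1,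
      -(ε⁻¹ : ℂ) * deriv (deriv y) x + Complex.I * (x : ℂ) * y x = lam * y x) ∧
    y (-1) = 0 ∧ y 1 = 0

/-!
Put `b = ε ^ (1/3)`, and let `f`, `g` be the solutions of the Airy equation with initial values
`(1, 0)` and `(0, 1)`, so that `g` is a multiple of `U₋`. The eigenvalues are the `λ` for which
`a = b λ` is a zero of the entire function
`D a = f (a + b i) g (a - b i) - g (a + b i) f (a - b i)`.

*Enough real zeros.* All zeros of `g` lie on the rays where `z³ < 0`, so `b < √3 α₁ / 2` keeps
them out of the strip `Re z > 0`, `0 ≤ Im z ≤ b`. There the quotient `g / v`, with `v` the recessive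
solution, has a continuous argument `Ψ` that vanishes on the real axis, and `D a = 0` for real `a`
as soon as `Ψ (a + b i)` is a multiple of `π`. An energy argument gives `Ψ (a + b i) < π` for small
`a`, and the WKB approximation gives `Ψ (a + b i) = 2 b √a + O(1)`; hence each level `(k + 1) π` is
attained.

*No others.* An energy estimate bounds `|D|` on large circles by the growth of a function whose
zeros are the ones already found, and Jensen's formula excludes a further one.
-/

/-- `u` satisfies the linear second-order equation `u'' = Q u`, and `u'` is its derivative. The
variable ranges over `𝕜` and the values lie in a possibly larger field `F`, so that one notion
covers entire solutions, their restrictions to lines in `ℂ`, and real solutions. -/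
structure SchrodingerSolution {𝕜 F : Type*} [NontriviallyNormedField 𝕜] [NormedField F]
    [NormedAlgebra 𝕜 F] (Q u u' : 𝕜 → F) : Prop where
  hasDerivAt : ∀ t, HasDerivAt u (u' t) t
  hasDerivAt_deriv : ∀ t, HasDerivAt u' (Q t * u t) t

/-- `w` satisfies the Airy equation `w'' = z w` on `𝕜`, and `w'` is its derivative. -/
abbrev AirySolution {𝕜 : Type*} [NontriviallyNormedField 𝕜] (w w' : 𝕜 → 𝕜) : Prop :=
  SchrodingerSolution (fun z => z) w w'

/-- The solutions of the Airy equation with `(f, f') = (1, 0)` and `(g, g') = (0, 1)` at `0`. -/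
structure AiryBasis {𝕜 : Type*} [NontriviallyNormedField 𝕜] (f f' g g' : 𝕜 → 𝕜) : Prop where
  left : AirySolution f f'
  right : AirySolution g g'
  left_zero : f 0 = 1
  deriv_left_zero : f' 0 = 0
  right_zero : g 0 = 0
  deriv_right_zero : g' 0 = 1

/-! ### Linear second-order equations -/

theorem le_of_hasDerivAt_nonneg {F F' : ℝ → ℝ} {x₀ x₁ : ℝ} (hF : ∀ t, HasDerivAt F (F' t) t)
    (hF' : ∀ t ∈ Set.Ioo x₀ x₁, 0 ≤ F' t) (hx : x₀ ≤ x₁) : F x₀ ≤ F x₁ := by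
  refine monotoneOn_of_deriv_nonneg (convex_Icc x₀ x₁)
    (fun t _ => (hF t).continuousAt.continuousWithinAt)
    (fun t _ => (hF t).differentiableAt.differentiableWithinAt) (fun t ht => ?_)
    (Set.left_mem_Icc.2 hx) (Set.right_mem_Icc.2 hx) hx
  rw [interior_Icc] at ht
  exact (hF t).deriv ▸ hF' t ht

theorem eq_zero_of_hasDerivAt_nonneg_of_endpoints {F F' : ℝ → ℝ} {x₀ x₁ : ℝ}
    (hF : ∀ t, HasDerivAt F (F' t) t) (hF' : ∀ t ∈ Set.Ioo x₀ x₁, 0 ≤ F' t)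
    (hx₀ : F x₀ = 0) (hx₁ : F x₁ = 0) : ∀ t ∈ Set.Ioo x₀ x₁, F' t = 0 := by
  intro t ht
  have hzero : ∀ s ∈ Set.Ioo x₀ x₁, F s = 0 := fun s hs => le_antisymm
    (hx₁ ▸ le_of_hasDerivAt_nonneg hF (fun t ht => hF' t ⟨hs.1.trans ht.1, ht.2⟩) hs.2.le)
    (hx₀ ▸ le_of_hasDerivAt_nonneg hF (fun t ht => hF' t ⟨ht.1, ht.2.trans hs.2⟩) hs.1.le)
  exact (hF t).unique ((hasDerivAt_const t (0 : ℝ)).congr_of_eventuallyEq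
    (Filter.eventually_of_mem (isOpen_Ioo.mem_nhds ht) hzero))

theorem one_div_sq_le_of_mem_Ioo {x₀ x₁ t : ℝ} (ht : t ∈ Set.Ioo x₀ x₁) :
    1 / (x₁ - x₀) ^ 2
      ≤ 2 / (x₁ - x₀) ^ 2 - (2 / (x₁ - x₀) ^ 2 * (t - (x₀ + x₁) / 2)) ^ 2 := by
  have hℓ : x₁ - x₀ ≠ 0 := (sub_pos.2 (ht.1.trans ht.2)).ne'
  have hsq : (t - (x₀ + x₁) / 2) ^ 2 ≤ (x₁ - x₀) ^ 2 / 4 := by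
    nlinarith [mul_pos (sub_pos.2 ht.1) (sub_pos.2 ht.2)]
  rw [le_sub_comm]
  calc (2 / (x₁ - x₀) ^ 2 * (t - (x₀ + x₁) / 2)) ^ 2
      = (2 / (x₁ - x₀) ^ 2) ^ 2 * (t - (x₀ + x₁) / 2) ^ 2 := mul_pow _ _ _
    _ ≤ (2 / (x₁ - x₀) ^ 2) ^ 2 * ((x₁ - x₀) ^ 2 / 4) := by gcongr
    _ = 2 / (x₁ - x₀) ^ 2 - 1 / (x₁ - x₀) ^ 2 := by field_simp; norm_num

theorem norm_energy_deriv_le {κ p q r : ℂ} {ρ : ℝ} (hκ : κ ≠ 0) (hr : ‖r‖ ≤ ρ) :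
    ‖2 * (starRingEnd ℂ p * q * (κ * (starRingEnd ℂ κ - κ) - r)).re‖
      ≤ (2 * |κ.im| + ρ / ‖κ‖) * (‖p‖ ^ 2 + ‖κ‖ ^ 2 * ‖q‖ ^ 2) := by
  have : 0 < ‖κ‖ := norm_pos_iff.2 hκ
  have hρ : 0 ≤ ρ := (norm_nonneg _).trans hr
  have hκ' : ‖starRingEnd ℂ κ - κ‖ = 2 * |κ.im| := by
    rw [norm_sub_rev, Complex.sub_conj, norm_mul, norm_I, mul_one, Complex.norm_real,
      Real.norm_eq_abs, abs_mul, abs_two]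
  rw [norm_mul, Real.norm_two]
  calc 2 * ‖(starRingEnd ℂ p * q * (κ * (starRingEnd ℂ κ - κ) - r)).re‖
      ≤ 2 * ‖starRingEnd ℂ p * q * (κ * (starRingEnd ℂ κ - κ) - r)‖ := by
        gcongr
        exact Complex.abs_re_le_norm _
    _ ≤ 2 * (‖p‖ * ‖q‖ * (‖κ‖ * (2 * |κ.im|) + ρ)) := by
        rw [norm_mul, norm_mul, Complex.norm_conj]
        gcongr
        refine (norm_sub_le _ _).trans ?_
        rw [norm_mul, hκ']
        gcongr
    _ = (2 * |κ.im| + ρ / ‖κ‖) * (2 * ‖p‖ * (‖κ‖ * ‖q‖)) := by field_simp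
    _ ≤ (2 * |κ.im| + ρ / ‖κ‖) * (‖p‖ ^ 2 + (‖κ‖ * ‖q‖) ^ 2) := by
        gcongr
        exact two_mul_le_add_sq _ _
    _ = _ := by rw [mul_pow]

namespace SchrodingerSolution

section Algebra

variable {𝕜 F : Type*} [RCLike 𝕜] [NormedField F] [NormedAlgebra 𝕜 F] {Q u u' v v' : 𝕜 → F}

theorem linear_combination (hu : SchrodingerSolution Q u u') (hv : SchrodingerSolution Q v v')
    (α β : F) :
    SchrodingerSolution Q (fun t => α * u t + β * v t) (fun t => α * u' t + β * v' t) where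
  hasDerivAt t := ((hu.hasDerivAt t).const_mul α).add ((hv.hasDerivAt t).const_mul β)
  hasDerivAt_deriv t := by
    convert! ((hu.hasDerivAt_deriv t).const_mul α).add ((hv.hasDerivAt_deriv t).const_mul β) using 1
    ring

theorem const_mul (hu : SchrodingerSolution Q u u') (α : F) :
    SchrodingerSolution Q (fun t => α * u t) (fun t => α * u' t) where
  hasDerivAt t := (hu.hasDerivAt t).const_mul α
  hasDerivAt_deriv t := by
    convert! (hu.hasDerivAt_deriv t).const_mul α using 1
    ring

theorem differentiable (hu : SchrodingerSolution Q u u') : Differentiable 𝕜 u :=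
  fun t => (hu.hasDerivAt t).differentiableAt

theorem wronskian_eq (hu : SchrodingerSolution Q u u') (hv : SchrodingerSolution Q v v')
    (s t : 𝕜) : u s * v' s - u' s * v s = u t * v' t - u' t * v t := by
  have hd : ∀ t, HasDerivAt (fun t => u t * v' t - u' t * v t) 0 t := fun t => by
    convert! ((hu.hasDerivAt t).mul (hv.hasDerivAt_deriv t)).sub
      ((hu.hasDerivAt_deriv t).mul (hv.hasDerivAt t)) using 1
    ring
  exact is_const_of_deriv_eq_zero (fun t => (hd t).differentiableAt) (fun t => (hd t).deriv) s t

theorem deriv_eq_zero_of_eqOn {s : Set 𝕜} {t : 𝕜} (hu : SchrodingerSolution Q u u')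
    (hs : IsOpen s) (hu0 : ∀ t ∈ s, u t = 0) (ht : t ∈ s) : u' t = 0 :=
  (hu.hasDerivAt t).unique ((hasDerivAt_const t (0 : F)).congr_of_eventuallyEq
    (Filter.eventually_of_mem (hs.mem_nhds ht) hu0))

end Algebra

theorem restrict_line {Q w w' : ℂ → ℂ} (hw : SchrodingerSolution Q w w') (c d : ℂ) :
    SchrodingerSolution (fun t : ℝ => d ^ 2 * Q (c + t * d)) (fun t : ℝ => w (c + t * d))
      (fun t : ℝ => d * w' (c + t * d)) := by
  have hline : ∀ t : ℝ, HasDerivAt (fun t : ℝ => c + (t : ℂ) * d) d t := fun t => by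
    simpa using ((ofRealCLM.hasDerivAt (x := t)).mul_const d).const_add c
  refine ⟨fun t => (hw.hasDerivAt _).scomp t (hline t), fun t => ?_⟩
  convert! ((hw.hasDerivAt_deriv _).scomp t (hline t)).const_mul d using 1
  rw [smul_eq_mul]
  ring

section ComplexValued

variable {Q u u' : ℝ → ℂ} {x₀ x₁ : ℝ}

theorem hasDerivAt_conj_mul_deriv (hu : SchrodingerSolution Q u u') (t : ℝ) :
    HasDerivAt (fun t => starRingEnd ℂ (u t) * u' t) (‖u' t‖ ^ 2 + Q t * ‖u t‖ ^ 2) t := by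
  convert! (hu.hasDerivAt t).star.mul (hu.hasDerivAt_deriv t) using 1
  rw [← Complex.mul_conj', ← Complex.mul_conj']
  simp only [starRingEnd_apply]
  ring

/-- Dirichlet problem on `[x₀, x₁]`: the derivative of
`Re (γ ū u') + c (Re γ) (t - m) |u|²`, with `m` the midpoint and `c = 2 / (x₁ - x₀)²`, dominates
`(Re (γ Q) + Re γ / (x₁ - x₀)²) |u|²`, and its integral vanishes. -/
theorem eq_zero_of_endpoints (hu : SchrodingerSolution Q u u') (γ : ℂ) (hγ : 0 ≤ γ.re)
    (hQ : ∀ t ∈ Set.Ioo x₀ x₁, 0 < (γ * Q t).re + γ.re / (x₁ - x₀) ^ 2)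
    (hx₀ : u x₀ = 0) (hx₁ : u x₁ = 0) : ∀ t ∈ Set.Ioo x₀ x₁, u t = 0 := by
  intro t ht
  set m : ℝ := (x₀ + x₁) / 2
  set c : ℝ := 2 / (x₁ - x₀) ^ 2
  have hF : ∀ t, HasDerivAt
      (fun t => (γ * (starRingEnd ℂ (u t) * u' t)).re + c * γ.re * ((t - m) * ‖u t‖ ^ 2))
      (γ.re * ‖u' t + (c * (t - m) : ℝ) * u t‖ ^ 2
        + ((γ * Q t).re + γ.re * (c - (c * (t - m)) ^ 2)) * ‖u t‖ ^ 2) t := fun t => by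
    convert! (reCLM.hasFDerivAt.comp_hasDerivAt t
      ((hu.hasDerivAt_conj_mul_deriv t).const_mul γ)).add
      ((((hasDerivAt_id t).sub_const m).mul (hu.hasDerivAt t).norm_sq).const_mul (c * γ.re)) using 1
    simp only [← ofReal_pow, ← normSq_eq_norm_sq, normSq_apply, Complex.inner, reCLM_apply, id_eq,
      mul_re, mul_im, add_re, add_im, conj_re, conj_im, ofReal_re, ofReal_im]
    ring
  have hpos : ∀ t ∈ Set.Ioo x₀ x₁, 0 < (γ * Q t).re + γ.re * (c - (c * (t - m)) ^ 2) := by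
    intro t ht
    calc 0 < (γ * Q t).re + γ.re * (1 / (x₁ - x₀) ^ 2) := by
          rw [mul_one_div]
          exact hQ t ht
      _ ≤ _ := by
          gcongr
          exact one_div_sq_le_of_mem_Ioo ht
  have hzero := eq_zero_of_hasDerivAt_nonneg_of_endpoints hF
    (fun t ht => by have := hpos t ht; positivity) (by simp [hx₀]) (by simp [hx₁]) t ht
  have hut : ((γ * Q t).re + γ.re * (c - (c * (t - m)) ^ 2)) * ‖u t‖ ^ 2 = 0 :=
    ((add_eq_zero_iff_of_nonneg (by positivity) (by have := hpos t ht; positivity)).1 hzero).2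
  exact norm_eq_zero.1 (eq_zero_of_pow_eq_zero
    ((mul_eq_zero.1 hut).resolve_left (hpos t ht).ne'))

theorem hasDerivAt_energy {r : ℝ → ℂ} {κ : ℂ}
    (hu : SchrodingerSolution (fun t => -(κ ^ 2 + r t)) u u') (t : ℝ) :
    HasDerivAt (fun t => ‖u' t‖ ^ 2 + ‖κ‖ ^ 2 * ‖u t‖ ^ 2)
      (2 * (starRingEnd ℂ (u' t) * u t * (κ * (starRingEnd ℂ κ - κ) - r t)).re) t := by
  convert! (hu.hasDerivAt_deriv t).norm_sq.add ((hu.hasDerivAt t).norm_sq.const_mul (‖κ‖ ^ 2))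
    using 1
  rw [← normSq_eq_norm_sq]
  simp only [normSq_apply, Complex.inner, pow_two, mul_re, mul_im, add_re, add_im, sub_re, sub_im,
    neg_re, neg_im, conj_re, conj_im]
  ring

theorem energy_le {r : ℝ → ℂ} {κ : ℂ} {ρ : ℝ}
    (hu : SchrodingerSolution (fun t => -(κ ^ 2 + r t)) u u') (hκ : κ ≠ 0) (hx : x₀ ≤ x₁)
    (hr : ∀ t ∈ Set.Icc x₀ x₁, ‖r t‖ ≤ ρ) :
    ‖u' x₁‖ ^ 2 + ‖κ‖ ^ 2 * ‖u x₁‖ ^ 2 ≤ (‖u' x₀‖ ^ 2 + ‖κ‖ ^ 2 * ‖u x₀‖ ^ 2) *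
      Real.exp ((2 * |κ.im| + ρ / ‖κ‖) * (x₁ - x₀)) := by
  have hgronwall := norm_le_gronwallBound_of_norm_deriv_right_le (ε := 0)
    (fun t _ => (hu.hasDerivAt_energy t).continuousAt.continuousWithinAt)
    (fun t _ => (hu.hasDerivAt_energy t).hasDerivWithinAt)
    le_rfl (K := 2 * |κ.im| + ρ / ‖κ‖) (fun t ht => ?_) x₁ (Set.right_mem_Icc.2 hx)
  · rwa [gronwallBound_ε0, Real.norm_of_nonneg (by positivity),
      Real.norm_of_nonneg (by positivity)] at hgronwall
  · rw [add_zero, Real.norm_of_nonneg (by positivity : 0 ≤ ‖u' t‖ ^ 2 + ‖κ‖ ^ 2 * ‖u t‖ ^ 2)]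
    exact norm_energy_deriv_le hκ (hr t (Set.Ico_subset_Icc_self ht))

theorem wronskian_eq_of_contDiff {y : ℝ → ℂ} (hu : SchrodingerSolution Q u u') (hy : ContDiff ℝ 2 y)
    (hode : Set.EqOn (deriv (deriv y)) (fun t => Q t * y t) (Set.Icc x₀ x₁)) :
    ∀ t ∈ Set.Icc x₀ x₁, y t * u' t - deriv y t * u t = y x₀ * u' x₀ - deriv y x₀ * u x₀ := by
  have hy' : ContDiff ℝ 1 (deriv y) := (contDiff_succ_iff_deriv.1 hy).2.2
  have hd : ∀ t, HasDerivAt (fun t => y t * u' t - deriv y t * u t)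
      ((Q t * y t - deriv (deriv y) t) * u t) t := fun t => by
    convert! ((hy.differentiable two_ne_zero t).hasDerivAt.mul (hu.hasDerivAt_deriv t)).sub
      ((hy'.differentiable one_ne_zero t).hasDerivAt.mul (hu.hasDerivAt t)) using 1
    ring
  refine constant_of_has_deriv_right_zero (fun t _ => (hd t).continuousAt.continuousWithinAt)
    fun t ht => ?_
  simpa [hode (Set.Ico_subset_Icc_self ht)] using (hd t).hasDerivWithinAt (s := Set.Ici t)

theorem exists_eqOn_linear_combination {v v' y : ℝ → ℂ}
    (hu : SchrodingerSolution Q u u') (hv : SchrodingerSolution Q v v')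
    (hW : u x₀ * v' x₀ - u' x₀ * v x₀ ≠ 0) (hy : ContDiff ℝ 2 y)
    (hode : Set.EqOn (deriv (deriv y)) (fun t => Q t * y t) (Set.Icc x₀ x₁)) :
    ∃ α β : ℂ, Set.EqOn y (fun t => α * u t + β * v t) (Set.Icc x₀ x₁) := by
  set W := u x₀ * v' x₀ - u' x₀ * v x₀ with hWdef
  refine ⟨(y x₀ * v' x₀ - deriv y x₀ * v x₀) / W, -(y x₀ * u' x₀ - deriv y x₀ * u x₀) / W,
    fun t ht => ?_⟩
  have hyu := hu.wronskian_eq_of_contDiff hy hode t ht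
  have hyv := hv.wronskian_eq_of_contDiff hy hode t ht
  have huv := hu.wronskian_eq hv t x₀
  rw [← hWdef] at huv
  beta_reduce
  rw [div_mul_eq_mul_div, div_mul_eq_mul_div, ← add_div, eq_div_iff hW]
  linear_combination -y t * huv + u t * hyv - v t * hyu

theorem deriv_deriv (hu : SchrodingerSolution Q u u') (t : ℝ) :
    deriv (deriv u) t = Q t * u t := by
  rw [funext fun s => (hu.hasDerivAt s).deriv]
  exact (hu.hasDerivAt_deriv t).deriv

theorem contDiff (hu : SchrodingerSolution Q u u') (hQ : Continuous Q) : ContDiff ℝ 2 u := by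
  refine (contDiff_succ_iff_deriv (n := 1)).2 ⟨fun t =>
    (hu.hasDerivAt t).differentiableAt, by simp, ?_⟩
  rw [funext fun s => (hu.hasDerivAt s).deriv]
  refine contDiff_one_iff_deriv.2 ⟨fun t => (hu.hasDerivAt_deriv t).differentiableAt, ?_⟩
  rw [funext fun s => (hu.hasDerivAt_deriv s).deriv]
  exact hQ.mul (Differentiable.continuous fun t => (hu.hasDerivAt t).differentiableAt)

end ComplexValued

end SchrodingerSolution

/-! ### The Airy equation -/

namespace AirySolution

theorem conj {w w' : ℂ → ℂ} (hw : AirySolution w w') :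
    AirySolution (fun z => starRingEnd ℂ (w (starRingEnd ℂ z)))
      (fun z => starRingEnd ℂ (w' (starRingEnd ℂ z))) where
  hasDerivAt z := by
    simpa [Function.comp_def] using (hw.hasDerivAt (starRingEnd ℂ z)).conj_conj
  hasDerivAt_deriv z := by
    simpa [Function.comp_def] using (hw.hasDerivAt_deriv (starRingEnd ℂ z)).conj_conj

end AirySolution

theorem SchrodingerSolution.airyBasis {u u' v v' : ℂ → ℂ} (hu : AirySolution u u')
    (hv : AirySolution v v') (hu₀ : u 0 ≠ 0) (hu₀' : u' 0 = 0) (hv₀ : v 0 = 0) (hv₀' : v' 0 ≠ 0) :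
    AiryBasis (fun z => (u 0)⁻¹ * u z) (fun z => (u 0)⁻¹ * u' z) (fun z => (v' 0)⁻¹ * v z)
      (fun z => (v' 0)⁻¹ * v' z) where
  left := hu.const_mul _
  right := hv.const_mul _
  left_zero := inv_mul_cancel₀ hu₀
  deriv_left_zero := by rw [hu₀', mul_zero]
  right_zero := by rw [hv₀, mul_zero]
  deriv_right_zero := inv_mul_cancel₀ hv₀'

namespace AiryBasis

section Field

variable {𝕜 : Type*} [RCLike 𝕜] {f f' g g' w w' : 𝕜 → 𝕜}

theorem wronskian (h : AiryBasis f f' g g') (z : 𝕜) : f z * g' z - f' z * g z = 1 := by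
  rw [h.left.wronskian_eq h.right z 0, h.left_zero, h.deriv_left_zero, h.deriv_right_zero]
  simp

theorem eq_linear_combination (h : AiryBasis f f' g g') (hw : AirySolution w w') (z : 𝕜) :
    w z = w 0 * f z + w' 0 * g z ∧ w' z = w 0 * f' z + w' 0 * g' z := by
  have hf := hw.wronskian_eq h.left z 0
  have hg := hw.wronskian_eq h.right z 0
  have hfg := h.wronskian z
  rw [h.left_zero, h.deriv_left_zero] at hf
  rw [h.right_zero, h.deriv_right_zero] at hg
  constructor
  · linear_combination (-w z) * hfg + f z * hg - g z * hf
  · linear_combination (-w' z) * hfg + f' z * hg - g' z * hf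

theorem eq_zero_of_eq_zero (h : AiryBasis f f' g g') {α β z : 𝕜}
    (hz : α * f z + β * g z = 0) (hz' : α * f' z + β * g' z = 0) : α = 0 ∧ β = 0 := by
  have hfg := h.wronskian z
  constructor
  · linear_combination g' z * hz - g z * hz' - α * hfg
  · linear_combination f z * hz' - f' z * hz - β * hfg

end Field

section Complex

variable {f f' g g' : ℂ → ℂ}

theorem wronskian_line (h : AiryBasis f f' g g') (c d : ℂ) (t : ℝ) :
    f (c + t * d) * (d * g' (c + t * d)) - d * f' (c + t * d) * g (c + t * d) = d := by
  linear_combination d * h.wronskian (c + t * d)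

theorem conj_left (h : AiryBasis f f' g g') (z : ℂ) :
    f (starRingEnd ℂ z) = starRingEnd ℂ (f z) ∧ f' (starRingEnd ℂ z) = starRingEnd ℂ (f' z) := by
  have := h.eq_linear_combination h.left.conj (starRingEnd ℂ z)
  simpa [h.left_zero, h.deriv_left_zero, eq_comm] using this

theorem conj_right (h : AiryBasis f f' g g') (z : ℂ) :
    g (starRingEnd ℂ z) = starRingEnd ℂ (g z) ∧ g' (starRingEnd ℂ z) = starRingEnd ℂ (g' z) := by
  have := h.eq_linear_combination h.right.conj (starRingEnd ℂ z)
  simpa [h.right_zero, h.deriv_right_zero, eq_comm] using this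

theorem eq_zero_of_eqOn_segment (h : AiryBasis f f' g g') {α β c d : ℂ} {x₀ x₁ : ℝ} (hd : d ≠ 0)
    (hlt : x₀ < x₁)
    (hz : ∀ t ∈ Set.Ioo x₀ x₁, α * f (c + (t : ℝ) * d) + β * g (c + (t : ℝ) * d) = 0) :
    α = 0 ∧ β = 0 := by
  obtain ⟨t, ht⟩ := Set.nonempty_Ioo.2 hlt
  have hw := (h.left.linear_combination h.right α β).restrict_line c d
  exact h.eq_zero_of_eq_zero (hz t ht)
    ((mul_eq_zero.1 (hw.deriv_eq_zero_of_eqOn isOpen_Ioo hz ht)).resolve_left hd)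

theorem eq_zero_of_vertical (h : AiryBasis f f' g g') {α β : ℂ} {a b : ℝ} (hb : 0 < b)
    (ha : a < 1 / (4 * b ^ 2)) (hup : α * f (a + b * I) + β * g (a + b * I) = 0)
    (hdown : α * f (a - b * I) + β * g (a - b * I) = 0) : α = 0 ∧ β = 0 := by
  have hw := (h.left.linear_combination h.right α β).restrict_line a I
  refine h.eq_zero_of_eqOn_segment I_ne_zero (neg_lt_self hb)
    (hw.eq_zero_of_endpoints 1 zero_le_one (fun t _ => ?_)
    (by simpa [← sub_eq_add_neg] using hdown) hup)
  have hlen : (b + b) ^ 2 = 4 * b ^ 2 := by ring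
  simpa [hlen] using ha

theorem cube_of_right_eq_zero (h : AiryBasis f f' g g') {z : ℂ} (hz : z ≠ 0) (hgz : g z = 0) :
    (z ^ 3).im = 0 ∧ (z ^ 3).re < 0 := by
  have hray := h.right.restrict_line 0 z
  -- A rotation making `Re (γ z³)` nonnegative would force `g` to vanish on the segment `[0, z]`.
  have hrot : ∀ γ : ℂ, 0 ≤ γ.re → 0 ≤ (γ * z ^ 3).re → γ.re + (γ * z ^ 3).re ≤ 0 := by
    intro γ hγ _
    by_contra! hpos
    have hzero := hray.eq_zero_of_endpoints (x₀ := 0) (x₁ := 1) γ hγ (fun t ht => ?_)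
      (by simp [h.right_zero]) (by simp [hgz])
    · refine one_ne_zero (h.eq_zero_of_eqOn_segment (α := 0) (β := 1) (c := 0) hz zero_lt_one
        fun t ht => ?_).2
      simpa using hzero t ht
    · have hQ : (γ * (z ^ 2 * (0 + t * z))).re = t * (γ * z ^ 3).re := by
        rw [← re_ofReal_mul]
        ring_nf
      rw [hQ, sub_zero, one_pow, div_one]
      nlinarith [ht.1, ht.2]
  have him : (z ^ 3).im = 0 := by
    have := hrot (-((z ^ 3).im : ℂ) * I) (by simp) (by simp [mul_self_nonneg])
    simpa using (this.antisymm (by simp [mul_self_nonneg]))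
  refine ⟨him, ?_⟩
  by_contra! hre
  have := hrot 1 zero_le_one (by simpa using hre)
  simp only [one_re, one_mul] at this
  linarith

end Complex

end AiryBasis

/-! ### The Airy equation on the positive half-line -/

theorem SchrodingerSolution.deriv_le_and_tangent_le {Q p p' : ℝ → ℝ} {x₀ x : ℝ}
    (hp : SchrodingerSolution Q p p') (hQ : ∀ t, x₀ < t → 0 ≤ Q t) (hp₀ : 0 ≤ p x₀)
    (hp₀' : 0 < p' x₀) (hx : x₀ ≤ x) :
    p' x₀ ≤ p' x ∧ p x₀ + p' x₀ * (x - x₀) ≤ p x := by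
  have hmul : ∀ s, x₀ ≤ s → 0 ≤ p s * p' s := fun s hs =>
    (mul_nonneg hp₀ hp₀'.le).trans (le_of_hasDerivAt_nonneg
      (fun t => (hp.hasDerivAt t).mul (hp.hasDerivAt_deriv t))
      (fun t ht => by nlinarith [mul_nonneg (hQ t ht.1) (mul_self_nonneg (p t))]) hs)
  have hsq : ∀ s, x₀ ≤ s → p' x₀ ^ 2 ≤ p' s ^ 2 := fun s hs =>
    le_of_hasDerivAt_nonneg (fun t => (hp.hasDerivAt_deriv t).fun_pow 2)
      (fun t ht => by
        have := mul_nonneg (hQ t ht.1) (hmul t ht.1.le)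
        simp only [Nat.cast_ofNat, Nat.add_one_sub_one, pow_one]
        nlinarith) hs
  have hderiv : ∀ s, x₀ ≤ s → p' x₀ ≤ p' s := by
    intro s hs
    refine (sq_le_sq₀ hp₀'.le ?_).1 (hsq s hs)
    by_contra! hneg
    obtain ⟨t, ht, ht0⟩ := intermediate_value_Icc' hs
      (fun t _ => (hp.hasDerivAt_deriv t).continuousAt.continuousWithinAt) ⟨hneg.le, hp₀'.le⟩
    have := hsq t ht.1
    rw [ht0, zero_pow two_ne_zero] at this
    exact this.not_gt (by positivity)
  have hline := le_of_hasDerivAt_nonneg (F := fun t => p t - p' x₀ * t)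
    (fun t => (hp.hasDerivAt t).sub ((hasDerivAt_id t).const_mul (p' x₀)))
    (fun t ht => by simpa using hderiv t ht.1.le) hx
  exact ⟨hderiv x hx, by linarith⟩

theorem SchrodingerSolution.hasDerivAt_mul_deriv {Q p p' : ℝ → ℝ} (hp : SchrodingerSolution Q p p')
    (x : ℝ) : HasDerivAt (fun x => p x * p' x) (p' x ^ 2 + Q x * p x ^ 2) x := by
  convert! (hp.hasDerivAt x).mul (hp.hasDerivAt_deriv x) using 1
  ring

theorem SchrodingerSolution.hasDerivAt_sq_sub {Q p p' : ℝ → ℝ} {d x : ℝ}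
    (hp : SchrodingerSolution Q p p') (hQ : HasDerivAt Q d x) :
    HasDerivAt (fun x => p' x ^ 2 - Q x * p x ^ 2) (-(d * p x ^ 2)) x := by
  convert! ((hp.hasDerivAt_deriv x).fun_pow 2).sub (hQ.mul ((hp.hasDerivAt x).fun_pow 2)) using 1
  simp only [Nat.cast_ofNat, Nat.add_one_sub_one, pow_one]
  ring

theorem SchrodingerSolution.hasDerivAt_sq_add {Q p p' : ℝ → ℝ} {d x : ℝ}
    (hp : SchrodingerSolution Q p p') (hQ : HasDerivAt Q d x) :
    HasDerivAt (fun x => p' x ^ 2 + Q x * p x ^ 2) (4 * (Q x * (p x * p' x)) + d * p x ^ 2) x := by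
  convert! ((hp.hasDerivAt_deriv x).fun_pow 2).add (hQ.mul ((hp.hasDerivAt x).fun_pow 2)) using 1
  simp only [Nat.cast_ofNat, Nat.add_one_sub_one, pow_one]
  ring

theorem abs_sub_sqrt_mul_le {x y z : ℝ} (hx : 0 ≤ x) (hy : 0 ≤ y) (hz : 0 ≤ z)
    (hlow : x * y ^ 2 ≤ z ^ 2 + y * z + y ^ 2) (hup : z ^ 2 ≤ (x + 1) * y ^ 2) :
    |z - √x * y| ≤ y := by
  have hs := mul_nonneg (Real.sqrt_nonneg x) hy
  have hsq : (√x * y) ^ 2 = x * y ^ 2 := by rw [mul_pow, Real.sq_sqrt hx]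
  rw [abs_sub_le_iff, sub_le_iff_le_add, sub_le_iff_le_add]
  constructor <;> refine (sq_le_sq₀ (by positivity) (by positivity)).1 ?_ <;> nlinarith

namespace AiryBasis

variable {p p' q q' : ℝ → ℝ}

theorem one_le_deriv_and_le_right (h : AiryBasis p p' q q') {x : ℝ} (hx : 0 ≤ x) :
    1 ≤ q' x ∧ x ≤ q x := by
  simpa [h.right_zero, h.deriv_right_zero] using
    h.right.deriv_le_and_tangent_le (x₀ := 0) (fun t ht => ht.le) h.right_zero.ge
      (h.deriv_right_zero ▸ one_pos) hx

theorem right_pos (h : AiryBasis p p' q q') {x : ℝ} (hx : 0 < x) : 0 < q x :=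
  hx.trans_le (h.one_le_deriv_and_le_right hx.le).2

theorem deriv_right_pos (h : AiryBasis p p' q q') {x : ℝ} (hx : 0 < x) : 0 < q' x :=
  one_pos.trans_le (h.one_le_deriv_and_le_right hx.le).1

theorem abs_deriv_right_sub_sqrt_mul_le (h : AiryBasis p p' q q') {x : ℝ} (hx : 1 ≤ x) :
    |q' x - √x * q x| ≤ q x := by
  have hx0 : 0 ≤ x := zero_le_one.trans hx
  obtain ⟨hq'1, hq1⟩ := h.one_le_deriv_and_le_right zero_le_one
  obtain ⟨hq'x, hqx⟩ := h.one_le_deriv_and_le_right hx0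
  have hqpos : 0 < q x := by linarith
  have hup : q' x ^ 2 - x * q x ^ 2 ≤ 1 := by
    have := le_of_hasDerivAt_nonneg (F := fun t => -(q' t ^ 2 - t * q t ^ 2))
      (fun t => (h.right.hasDerivAt_sq_sub (hasDerivAt_id' t)).neg)
      (fun t _ => by rw [neg_neg]; positivity) hx0
    simp only [h.right_zero, h.deriv_right_zero] at this
    linarith
  have hmono : q 1 ≤ q x := by
    have := (h.right.deriv_le_and_tangent_le (x₀ := 1) (fun t ht => by linarith) (by linarith)
      (by linarith) hx).2
    nlinarith
  have hlow : -q x ^ 2 ≤ q' x ^ 2 - x * q x ^ 2 + q x * q' x := by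
    have := le_of_hasDerivAt_nonneg (F := fun t => q' t ^ 2 - t * q t ^ 2 + q t * q' t)
      (fun t => (h.right.hasDerivAt_sq_sub (hasDerivAt_id' t)).add (h.right.hasDerivAt_mul_deriv t))
      (fun t ht => by
        have := mul_nonneg (sub_nonneg.2 ht.1.le) (sq_nonneg (q t))
        nlinarith [sq_nonneg (q' t)]) hx
    nlinarith
  exact abs_sub_sqrt_mul_le hx0 hqpos.le (by linarith) (by linarith) (by nlinarith)

end AiryBasis

/-- A real solution of the Airy equation which is positive and decreasing on the positive
half-line; the nonzero multiples of `Ai` are, up to sign, the only ones. -/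
structure RecessiveSolution (p p' : ℝ → ℝ) : Prop extends AirySolution p p' where
  pos : ∀ x, 0 < x → 0 < p x
  deriv_neg : ∀ x, 0 < x → p' x < 0

namespace AiryBasis

variable {p p' q q' : ℝ → ℝ}

theorem strictAntiOn_div (h : AiryBasis p p' q q') :
    StrictAntiOn (fun x => p x / q x) (Set.Ioi 0) := by
  have hder : ∀ x ∈ Set.Ioi (0 : ℝ), HasDerivAt (fun x => p x / q x) (-1 / q x ^ 2) x := by
    intro x hx
    convert! (h.left.hasDerivAt x).div (h.right.hasDerivAt x) (h.right_pos hx).ne' using 1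
    rw [← h.wronskian x]
    ring
  refine strictAntiOn_of_hasDerivWithinAt_neg (convex_Ioi 0)
    (fun x hx => (hder x hx).continuousAt.continuousWithinAt)
    (fun x hx => (hder x (interior_subset hx)).hasDerivWithinAt) fun x hx => ?_
  exact div_neg_of_neg_of_pos (by norm_num) (pow_pos (h.right_pos (interior_subset hx)) 2)

theorem strictMonoOn_deriv_div (h : AiryBasis p p' q q') :
    StrictMonoOn (fun x => p' x / q' x) (Set.Ioi 0) := by
  have hder : ∀ x ∈ Set.Ioi (0 : ℝ), HasDerivAt (fun x => p' x / q' x) (x / q' x ^ 2) x := by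
    intro x hx
    convert! (h.left.hasDerivAt_deriv x).div (h.right.hasDerivAt_deriv x)
      (h.deriv_right_pos hx).ne' using 1
    congr 1
    linear_combination (-x) * h.wronskian x
  refine strictMonoOn_of_hasDerivWithinAt_pos (convex_Ioi 0)
    (fun x hx => (hder x hx).continuousAt.continuousWithinAt)
    (fun x hx => (hder x (interior_subset hx)).hasDerivWithinAt) fun x hx => ?_
  exact div_pos (interior_subset hx) (pow_pos (h.deriv_right_pos (interior_subset hx)) 2)

/-- On `(0, ∞)` the increasing function `p' / q'` lies below the decreasing function `p / q`; any
number between the two is a suitable `c`. -/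
theorem exists_recessive (h : AiryBasis p p' q q') :
    ∃ c, RecessiveSolution (fun x => p x - c * q x) (fun x => p' x - c * q' x) := by
  have hlt : ∀ x, 0 < x → p' x / q' x < p x / q x := fun x hx => by
    rw [div_lt_div_iff₀ (h.deriv_right_pos hx) (h.right_pos hx)]
    linarith [h.wronskian x]
  obtain ⟨c, hc', hc⟩ := exists_between_of_forall_le
    (s := (fun x => p' x / q' x) '' Set.Ioi 0) (t := (fun x => p x / q x) '' Set.Ioi 0)
    (Set.nonempty_Ioi.image _) (Set.nonempty_Ioi.image _) (by
      rintro _ ⟨x, hx, rfl⟩ _ ⟨y, hy, rfl⟩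
      have hmax : max x y ∈ Set.Ioi (0 : ℝ) := Set.mem_Ioi.2 (lt_max_of_lt_left hx)
      exact (h.strictMonoOn_deriv_div.monotoneOn hx hmax (le_max_left x y)).trans
        ((hlt _ hmax).le.trans (h.strictAntiOn_div.antitoneOn hy hmax (le_max_right x y))))
  have hsucc : ∀ x : ℝ, 0 < x → x + 1 ∈ Set.Ioi (0 : ℝ) := fun x hx =>
    Set.mem_Ioi.2 (by positivity)
  refine ⟨c, ⟨?_, fun x hx => ?_, fun x hx => ?_⟩⟩
  · convert! h.left.linear_combination h.right 1 (-c) using 2 <;> ring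
  · have := (hc ⟨x + 1, hsucc x hx, rfl⟩).trans_lt
      (h.strictAntiOn_div hx (hsucc x hx) (lt_add_one x))
    exact sub_pos.2 ((lt_div_iff₀ (h.right_pos hx)).1 this)
  · have := (h.strictMonoOn_deriv_div hx (hsucc x hx) (lt_add_one x)).trans_le
      (hc' ⟨x + 1, hsucc x hx, rfl⟩)
    exact sub_neg.2 ((div_lt_iff₀ (h.deriv_right_pos hx)).1 this)

end AiryBasis

namespace RecessiveSolution

variable {p p' : ℝ → ℝ}

/-- Otherwise `(p p')' = p'² + x p²` would stay bounded below by a positive constant, and the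
negative function `p p'` could not stay negative. -/
theorem mul_sq_le_deriv_sq (h : RecessiveSolution p p') {x : ℝ} (hx : 0 < x) :
    x * p x ^ 2 ≤ p' x ^ 2 := by
  by_contra! hlt
  set δ : ℝ := x * p x ^ 2 - p' x ^ 2
  have hδ0 : 0 < δ := sub_pos.2 hlt
  have hpersist : ∀ t, x ≤ t → δ ≤ t * p t ^ 2 - p' t ^ 2 := fun t ht => by
    have := le_of_hasDerivAt_nonneg (F := fun t => -(p' t ^ 2 - t * p t ^ 2))
      (fun t => (h.hasDerivAt_sq_sub (hasDerivAt_id' t)).neg)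
      (fun t _ => by rw [neg_neg]; positivity) ht
    linarith
  have hneg : ∀ t, 0 < t → p t * p' t < 0 := fun t ht =>
    mul_neg_of_pos_of_neg (h.pos t ht) (h.deriv_neg t ht)
  set y : ℝ := x - p x * p' x / δ with hy
  have hxy : x ≤ y := by
    have := div_neg_of_neg_of_pos (hneg x hx) hδ0
    linarith
  have hle := le_of_hasDerivAt_nonneg (F := fun t => p t * p' t - δ * t)
    (fun t => (h.hasDerivAt_mul_deriv t).sub ((hasDerivAt_id t).const_mul δ))
    (fun t ht => by nlinarith [hpersist t ht.1.le, sq_nonneg (p' t)]) hxy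
  have hyδ : δ * y = δ * x - p x * p' x := by
    rw [hy]
    field_simp
  linarith [hneg y (hx.trans_le hxy)]

theorem le_neg_deriv (h : RecessiveSolution p p') {x : ℝ} (hx : 1 ≤ x) : p x ≤ -p' x := by
  have hx0 : 0 < x := one_pos.trans_le hx
  refine (sq_le_sq₀ (h.pos x hx0).le (by linarith [h.deriv_neg x hx0])).1 ?_
  rw [neg_sq]
  nlinarith [h.mul_sq_le_deriv_sq hx0, sq_nonneg (p x)]

/-- The energy `e = p'² + x p²` is nonincreasing and is the derivative of the bounded function
`p p'`, whence `(x - 1) e x ≤ - p 1 * p' 1`. -/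
theorem tendsto_energy (h : RecessiveSolution p p') :
    Filter.Tendsto (fun x => p' x ^ 2 + x * p x ^ 2) Filter.atTop (nhds 0) := by
  have hanti : ∀ s t, 1 ≤ s → s ≤ t → p' t ^ 2 + t * p t ^ 2 ≤ p' s ^ 2 + s * p s ^ 2 := by
    refine fun s t hs hst => neg_le_neg_iff.1
      (le_of_hasDerivAt_nonneg (F := fun t => -(p' t ^ 2 + t * p t ^ 2)) (x₀ := s) (x₁ := t)
        (fun r => (h.hasDerivAt_sq_add (hasDerivAt_id' r)).neg) (fun r hr => ?_) hst)
    have hr1 : 1 ≤ r := hs.trans hr.1.le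
    have hr0 := h.pos r (one_pos.trans_le hr1)
    nlinarith [mul_nonneg hr0.le (sub_nonneg.2 (h.le_neg_deriv hr1)),
      mul_nonneg (mul_nonneg hr0.le (sub_nonneg.2 hr1)) (hr0.le.trans (h.le_neg_deriv hr1))]
  have hbound : ∀ x, 2 ≤ x → p' x ^ 2 + x * p x ^ 2 ≤ -(p 1 * p' 1) / (x - 1) := by
    intro x hx
    have hmean := le_of_hasDerivAt_nonneg
      (F := fun t => p t * p' t - (p' x ^ 2 + x * p x ^ 2) * t)
      (fun t => (h.hasDerivAt_mul_deriv t).sub ((hasDerivAt_id t).const_mul _))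
      (fun t ht => by
        rw [mul_one, sub_nonneg]
        exact hanti t x ht.1.le ht.2.le) (by linarith : 1 ≤ x)
    have hx0 : 0 < x := by linarith
    rw [le_div_iff₀ (by linarith)]
    linarith [mul_neg_of_pos_of_neg (h.pos x hx0) (h.deriv_neg x hx0)]
  refine squeeze_zero' ?_ (Filter.eventually_atTop.2 ⟨2, hbound⟩)
    ((Filter.tendsto_atTop_add_const_right _ (-1) Filter.tendsto_id).const_div_atTop _)
  filter_upwards [Filter.eventually_ge_atTop 0] with x hx
  positivity

theorem deriv_sq_le (h : RecessiveSolution p p') {x : ℝ} (hx : 1 ≤ x) :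
    p' x ^ 2 ≤ (x + 1) * p x ^ 2 := by
  have hle : ∀ y, x ≤ y →
      p' x ^ 2 - x * p x ^ 2 - p x ^ 2 ≤ p' y ^ 2 - y * p y ^ 2 - p y ^ 2 := fun y hy =>
    le_of_hasDerivAt_nonneg (F := fun t => p' t ^ 2 - t * p t ^ 2 - p t ^ 2)
      (fun t => (h.hasDerivAt_sq_sub (hasDerivAt_id' t)).sub ((h.hasDerivAt t).fun_pow 2))
      (fun t ht => by
        have ht1 : 1 ≤ t := hx.trans ht.1.le
        have := h.pos t (one_pos.trans_le ht1)
        simp only [Nat.cast_ofNat, Nat.add_one_sub_one, pow_one]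
        nlinarith [h.le_neg_deriv ht1]) hy
  have hlim : p' x ^ 2 - x * p x ^ 2 - p x ^ 2 ≤ 0 := by
    refine ge_of_tendsto h.tendsto_energy ?_
    filter_upwards [Filter.eventually_ge_atTop x] with y hy
    nlinarith [hle y hy, mul_nonneg (zero_le_one.trans (hx.trans hy)) (sq_nonneg (p y)),
      sq_nonneg (p y)]
  linarith

theorem abs_deriv_add_sqrt_mul_le (h : RecessiveSolution p p') {x : ℝ} (hx : 1 ≤ x) :
    |p' x + √x * p x| ≤ p x := by
  have hx0 : 0 < x := one_pos.trans_le hx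
  have hp := h.pos x hx0
  have hp' := h.deriv_neg x hx0
  rw [← abs_neg, neg_add', neg_eq_neg_one_mul (p' x)]
  exact abs_sub_sqrt_mul_le hx0.le hp.le (by linarith)
    (by nlinarith [h.mul_sq_le_deriv_sq hx0]) (by nlinarith [h.deriv_sq_le hx])

end RecessiveSolution

/-! ### Zeros in the right half-plane -/

theorem AirySolution.re_ofReal {w w' : ℂ → ℂ} (hw : AirySolution w w') :
    AirySolution (fun x : ℝ => (w x).re) (fun x : ℝ => (w' x).re) where
  hasDerivAt x := (hw.hasDerivAt x).real_of_complex
  hasDerivAt_deriv x := by simpa using (hw.hasDerivAt_deriv x).real_of_complex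

theorem AiryBasis.re_ofReal {f f' g g' : ℂ → ℂ} (h : AiryBasis f f' g g') :
    AiryBasis (fun x : ℝ => (f x).re) (fun x : ℝ => (f' x).re) (fun x : ℝ => (g x).re)
      (fun x : ℝ => (g' x).re) where
  left := h.left.re_ofReal
  right := h.right.re_ofReal
  left_zero := by simp [h.left_zero]
  deriv_left_zero := by simp [h.deriv_left_zero]
  right_zero := by simp [h.right_zero]
  deriv_right_zero := by simp [h.deriv_right_zero]

theorem AiryBasis.ofReal_re_right {f f' g g' : ℂ → ℂ} (h : AiryBasis f f' g g') (x : ℝ) :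
    ((g x).re : ℂ) = g x ∧ ((g' x).re : ℂ) = g' x := by
  have hconj := h.conj_right x
  rw [conj_ofReal] at hconj
  exact ⟨conj_eq_iff_re.1 hconj.1.symm, conj_eq_iff_re.1 hconj.2.symm⟩

theorem SchrodingerSolution.hasDerivAt_im_conj_mul_deriv {Q u u' : ℝ → ℂ}
    (hu : SchrodingerSolution Q u u') (t : ℝ) :
    HasDerivAt (fun t => (starRingEnd ℂ (u t) * u' t).im) ((Q t).im * ‖u t‖ ^ 2) t := by
  convert! imCLM.hasFDerivAt.comp_hasDerivAt t (hu.hasDerivAt_conj_mul_deriv t) using 1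
  simp [← ofReal_pow]

theorem AirySolution.vertical_energy_le {w w' : ℂ → ℂ} (hw : AirySolution w w') {x t : ℝ}
    (hx : 0 < x) (ht : 0 ≤ t) :
    ‖w' (x + t * I)‖ ^ 2 + x * ‖w (x + t * I)‖ ^ 2
      ≤ (‖w' x‖ ^ 2 + x * ‖w x‖ ^ 2) * Real.exp (t / √x * t) := by
  have hsq : ((√x : ℝ) : ℂ) ^ 2 = x := by rw [← ofReal_pow, Real.sq_sqrt hx.le]
  have hline : SchrodingerSolution (fun s : ℝ => -(((√x : ℝ) : ℂ) ^ 2 + s * I))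
      (fun s : ℝ => w (x + s * I)) (fun s : ℝ => I * w' (x + s * I)) := by
    convert! hw.restrict_line x I using 2 with s
    rw [hsq, I_sq]
    ring
  have := hline.energy_le (ρ := t) (ofReal_ne_zero.2 (Real.sqrt_pos.2 hx).ne') ht fun s hs => by
    rw [norm_mul, norm_I, mul_one, Complex.norm_of_nonneg hs.1]
    exact hs.2
  simpa [abs_of_nonneg (Real.sqrt_nonneg x), Real.sq_sqrt hx.le] using this

theorem eq_zero_of_horizontal_segment {w : ℂ → ℂ} (hw : Differentiable ℂ w) {x₀ x₁ : ℝ} {c : ℂ}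
    (hlt : x₀ < x₁) (hzero : ∀ x ∈ Set.Ioo x₀ x₁, w ((x : ℝ) + c) = 0) : w = 0 := by
  obtain ⟨m, hm⟩ := Set.nonempty_Ioo.2 hlt
  have hline : HasDerivAt (fun x : ℝ => (x : ℂ) + c) 1 m :=
    (ofRealCLM.hasDerivAt (x := m)).add_const c
  refine AnalyticOnNhd.eq_of_frequently_eq (fun z _ => hw.analyticAt z)
    (fun z _ => analyticAt_const) (z₀ := (m : ℂ) + c)
    ((hline.tendsto_nhdsNE one_ne_zero).frequently ?_)
  refine Filter.Eventually.frequently ?_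
  filter_upwards [nhdsWithin_le_nhds (isOpen_Ioo.mem_nhds hm)] with x hx using hzero x hx

/-- An entire solution of the Airy equation which is real and recessive on the real line; the
model is `Ai`. -/
structure EntireRecessiveSolution (v v' : ℂ → ℂ) : Prop extends AirySolution v v' where
  conj : ∀ z, v (starRingEnd ℂ z) = starRingEnd ℂ (v z)
  deriv_conj : ∀ z, v' (starRingEnd ℂ z) = starRingEnd ℂ (v' z)
  re_ofReal : RecessiveSolution (fun x : ℝ => (v x).re) (fun x : ℝ => (v' x).re)

theorem AiryBasis.exists_entireRecessive {f f' g g' : ℂ → ℂ} (h : AiryBasis f f' g g') :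
    ∃ c : ℝ, EntireRecessiveSolution (fun z => f z - c * g z) (fun z => f' z - c * g' z) := by
  obtain ⟨c, hc⟩ := h.re_ofReal.exists_recessive
  refine ⟨c, ⟨?_, fun z => ?_, fun z => ?_, by simpa using hc⟩⟩
  · convert! h.left.linear_combination h.right 1 (-c) using 2 <;> ring
  · simp [(h.conj_left z).1, (h.conj_right z).1]
  · simp [(h.conj_left z).2, (h.conj_right z).2]

namespace EntireRecessiveSolution

variable {v v' : ℂ → ℂ}

theorem ofReal_re (h : EntireRecessiveSolution v v') (x : ℝ) :
    ((v x).re : ℂ) = v x ∧ ((v' x).re : ℂ) = v' x := by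
  have hconj := h.conj x
  have hconj' := h.deriv_conj x
  rw [conj_ofReal] at hconj hconj'
  exact ⟨conj_eq_iff_re.1 hconj.symm, conj_eq_iff_re.1 hconj'.symm⟩

theorem tendsto_energy (h : EntireRecessiveSolution v v') {t : ℝ} (ht : 0 ≤ t) :
    Filter.Tendsto (fun x : ℝ => ‖v' (x + t * I)‖ ^ 2 + x * ‖v (x + t * I)‖ ^ 2)
      Filter.atTop (nhds 0) := by
  have hlim := h.re_ofReal.tendsto_energy.mul_const (Real.exp (t * t))
  rw [zero_mul] at hlim
  refine squeeze_zero' ?_ ?_ hlim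
  · filter_upwards [Filter.eventually_ge_atTop 0] with x hx
    positivity
  · filter_upwards [Filter.eventually_ge_atTop 1] with x hx
    refine (AirySolution.vertical_energy_le h.1 (one_pos.trans_le hx) ht).trans ?_
    have hexp : Real.exp (t / √x * t) ≤ Real.exp (t * t) := by
      gcongr
      exact div_le_self ht (Real.one_le_sqrt.2 hx)
    have hnorm : ∀ z : ℂ, (z.re : ℂ) = z → ‖z‖ ^ 2 = z.re ^ 2 := fun z hz => by
      conv_lhs => rw [← hz, Complex.norm_real, Real.norm_eq_abs, sq_abs]
    rw [hnorm _ (h.ofReal_re x).1, hnorm _ (h.ofReal_re x).2]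
    exact mul_le_mul_of_nonneg_left hexp (by positivity)

theorem ne_zero_of_im_pos (h : EntireRecessiveSolution v v') {x₀ t : ℝ} (ht : 0 < t) :
    v (x₀ + t * I) ≠ 0 := by
  intro hzero
  have hline : SchrodingerSolution (fun x : ℝ => x + t * I) (fun x : ℝ => v (x + t * I))
      (fun x : ℝ => v' (x + t * I)) := by
    convert! h.restrict_line (t * I) 1 using 2 with x <;> ring_nf
  set J : ℝ → ℝ := fun x => (starRingEnd ℂ (v (x + t * I)) * v' (x + t * I)).im with hJ
  have hder : ∀ x : ℝ, HasDerivAt J (t * ‖v (x + t * I)‖ ^ 2) x := fun x => by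
    convert! hline.hasDerivAt_im_conj_mul_deriv x using 2
    simp
  have hmono : Monotone J := fun x y hxy =>
    le_of_hasDerivAt_nonneg hder (fun u _ => by positivity) hxy
  have hlim : Filter.Tendsto J Filter.atTop (nhds 0) := by
    refine squeeze_zero_norm' ?_ (h.tendsto_energy ht.le)
    filter_upwards [Filter.eventually_ge_atTop 1] with x hx
    refine (Complex.abs_im_le_norm _).trans ?_
    rw [norm_mul, Complex.norm_conj]
    nlinarith [sq_nonneg (‖v' (x + t * I)‖ - ‖v (x + t * I)‖), sq_nonneg ‖v' (x + t * I)‖,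
      mul_nonneg (sub_nonneg.2 hx) (sq_nonneg ‖v (x + t * I)‖)]
  have hJ₀ : J x₀ = 0 := by simp [hJ, hzero]
  have hJ₁ : J (x₀ + 1) = 0 := le_antisymm (hmono.ge_of_tendsto hlim _)
    (hJ₀ ▸ hmono (by linarith))
  have hv : ∀ x ∈ Set.Ioo x₀ (x₀ + 1), v (x + t * I) = 0 := fun x hx => by
    simpa [ht.ne'] using eq_zero_of_hasDerivAt_nonneg_of_endpoints hder
      (fun u _ => by positivity) hJ₀ hJ₁ x hx
  exact (h.re_ofReal.pos 1 one_pos).ne'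
    (by simp [eq_zero_of_horizontal_segment h.differentiable (lt_add_one x₀) hv])

theorem ne_zero (h : EntireRecessiveSolution v v') {z : ℂ} (hz : 0 < z.re) : v z ≠ 0 := by
  rcases lt_trichotomy 0 z.im with him | him | him
  · simpa using h.ne_zero_of_im_pos (x₀ := z.re) him
  · obtain ⟨x, rfl⟩ : ∃ x : ℝ, (x : ℂ) = z := ⟨z.re, Complex.ext rfl (by simp [him])⟩
    rw [← (h.ofReal_re x).1]
    exact ofReal_ne_zero.2 (h.re_ofReal.pos x hz).ne'
  · have hz' : (z.re : ℂ) + ((-z.im : ℝ) : ℂ) * I = starRingEnd ℂ z :=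
      Complex.ext (by simp) (by simp)
    have := h.ne_zero_of_im_pos (x₀ := z.re) (neg_pos.2 him)
    rwa [hz', h.conj, map_ne_zero] at this

end EntireRecessiveSolution

theorem two_mul_mul_exp_pi_div_three {z : ℂ} (h : z.im = √3 * z.re) :
    ((2 * z.re : ℝ) : ℂ) * Complex.exp ((π / 3 : ℝ) * I) = z := by
  rw [exp_mul_I, ← ofReal_cos, ← ofReal_sin, Real.cos_pi_div_three, Real.sin_pi_div_three]
  refine Complex.ext ?_ ?_
  · simp
    ring
  · simp [h]
    ring

/-- The zeros of `g` in the right half-plane lie on the two rays `arg z = ±π/3`. -/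
theorem AiryBasis.right_ne_zero {f f' g g' : ℂ → ℂ} (h : AiryBasis f f' g g') {B : ℝ}
    (hB : ∀ r ∈ rayZeroModuli g, B ≤ √3 / 2 * r) {z : ℂ} (hz : 0 < z.re) (hzB : |z.im| < B) :
    g z ≠ 0 := by
  intro hzero
  obtain ⟨him, hre⟩ := h.cube_of_right_eq_zero (fun h0 => by simp [h0] at hz) hzero
  simp only [pow_succ, pow_zero, one_mul, mul_im, mul_re] at him hre
  have hsq : z.im ^ 2 = (√3 * z.re) ^ 2 := by
    have hne : z.im ≠ 0 := fun h0 => by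
      rw [h0] at hre
      nlinarith [pow_pos hz 3]
    rw [mul_pow, Real.sq_sqrt (by norm_num)]
    exact mul_left_cancel₀ hne (by linarith)
  have hmem : 2 * z.re ∈ rayZeroModuli g := by
    refine ⟨by linarith, ?_⟩
    rcases sq_eq_sq_iff_eq_or_eq_neg.1 hsq with hup | hdown
    · rw [two_mul_mul_exp_pi_div_three hup, hzero]
    · rw [← conj_re, two_mul_mul_exp_pi_div_three (by simp [hdown]), (h.conj_right z).1, hzero,
        map_zero]
  have habs : |z.im| = √3 * z.re := by
    rw [← abs_of_nonneg (by positivity : 0 ≤ √3 * z.re)]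
    exact (sq_eq_sq_iff_abs_eq_abs _ _).1 hsq
  linarith [hB _ hmem]

/-! ### WKB approximation -/

/-- The constant in the WKB error bound `wkbConst c / |k|` for `u'' = -(k² + r) u` on an interval
of length `b` with `b |r| ≤ c`. -/
def wkbConst (c : ℝ) : ℝ := c * √(5 * Real.exp c) + 1

theorem one_le_wkbConst {c : ℝ} (hc : 0 ≤ c) : 1 ≤ wkbConst c :=
  le_add_of_nonneg_left (mul_nonneg hc (Real.sqrt_nonneg _))

namespace SchrodingerSolution

variable {u u' r : ℝ → ℂ} {k b ρ t : ℝ}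

theorem hasDerivAt_exp_mul {κ m : ℂ} (hu : SchrodingerSolution (fun t => -(κ ^ 2 + r t)) u u')
    (hm : m ^ 2 = κ ^ 2) (t : ℝ) :
    HasDerivAt (fun t : ℝ => Complex.exp (-(m * t * I)) * (u' t + m * I * u t))
      (Complex.exp (-(m * t * I)) * (-r t * u t)) t := by
  have hexp : HasDerivAt (fun t : ℝ => Complex.exp (-(m * t * I)))
      (Complex.exp (-(m * t * I)) * -(m * 1 * I)) t :=
    (((ofRealCLM.hasDerivAt (x := t)).const_mul m).mul_const I).neg.cexp
  convert! hexp.mul ((hu.hasDerivAt_deriv t).add ((hu.hasDerivAt t).const_mul (m * I))) using 1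
  simp only [Pi.add_apply]
  linear_combination Complex.exp (-(m * t * I)) * u t * (m ^ 2 * I_sq - hm)

theorem norm_le_sqrt_exp_mul (hu : SchrodingerSolution (fun t => -((k : ℂ) ^ 2 + r t)) u u')
    (hk : 1 ≤ |k|) (hr : ∀ t ∈ Set.Icc 0 b, ‖r t‖ ≤ ρ) (ht : t ∈ Set.Icc 0 b)
    (hu₀ : ‖u' 0‖ ≤ 2 * |k| * ‖u 0‖) : ‖u t‖ ≤ √(5 * Real.exp (b * ρ)) * ‖u 0‖ := by
  have hk0 : k ≠ 0 := fun h => by norm_num [h] at hk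
  have hρ : 0 ≤ ρ := (norm_nonneg _).trans (hr t ht)
  have henergy := hu.energy_le (ofReal_ne_zero.2 hk0) ht.1
    fun s hs => hr s ⟨hs.1, hs.2.trans ht.2⟩
  simp only [ofReal_im, abs_zero, mul_zero, zero_add, sub_zero, Complex.norm_real,
    Real.norm_eq_abs] at henergy
  have hexp : ρ / |k| * t ≤ b * ρ := by
    rw [mul_comm b ρ]
    exact mul_le_mul (div_le_self hρ hk) ht.2 ht.1 hρ
  refine (sq_le_sq₀ (norm_nonneg _) (by positivity)).1 ?_
  rw [mul_pow, Real.sq_sqrt (by positivity)]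
  refine le_of_mul_le_mul_left ?_ (by positivity : 0 < |k| ^ 2)
  calc |k| ^ 2 * ‖u t‖ ^ 2
      ≤ ‖u' t‖ ^ 2 + |k| ^ 2 * ‖u t‖ ^ 2 := le_add_of_nonneg_left (sq_nonneg _)
    _ ≤ (‖u' 0‖ ^ 2 + |k| ^ 2 * ‖u 0‖ ^ 2) * Real.exp (ρ / |k| * t) := henergy
    _ ≤ ((2 * |k| * ‖u 0‖) ^ 2 + |k| ^ 2 * ‖u 0‖ ^ 2) * Real.exp (b * ρ) := by gcongr
    _ = |k| ^ 2 * (5 * Real.exp (b * ρ) * ‖u 0‖ ^ 2) := by ring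

theorem norm_exp_mul_sub_le_of_sq_eq {m : ℝ}
    (hu : SchrodingerSolution (fun t => -((k : ℂ) ^ 2 + r t)) u u')
    (hk : 1 ≤ |k|) (hm : m ^ 2 = k ^ 2) (hr : ∀ t ∈ Set.Icc 0 b, ‖r t‖ ≤ ρ)
    (ht : t ∈ Set.Icc 0 b) (hu₀ : ‖u' 0‖ ≤ 2 * |k| * ‖u 0‖) :
    ‖Complex.exp (-(m * t * I)) * (u' t + m * I * u t) - (u' 0 + m * I * u 0)‖
      ≤ b * ρ * √(5 * Real.exp (b * ρ)) * ‖u 0‖ := by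
  have hρ : 0 ≤ ρ := (norm_nonneg _).trans (hr t ht)
  have hmean := norm_image_sub_le_of_norm_deriv_le_segment' (a := 0) (b := b)
    (C := ρ * (√(5 * Real.exp (b * ρ)) * ‖u 0‖))
    (fun s _ => (hu.hasDerivAt_exp_mul (m := m) (mod_cast hm) s).hasDerivWithinAt)
    (fun s hs => by
      have hs' := Set.Ico_subset_Icc_self hs
      rw [norm_mul, norm_mul, norm_neg, ← ofReal_mul, ← neg_mul, ← ofReal_neg,
        norm_exp_ofReal_mul_I, one_mul]
      exact mul_le_mul (hr s hs') (hu.norm_le_sqrt_exp_mul hk hr hs' hu₀) (norm_nonneg _) hρ) t ht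
  simp only [ofReal_zero, mul_zero, zero_mul, neg_zero, Complex.exp_zero, one_mul, sub_zero]
    at hmean
  calc _ ≤ ρ * (√(5 * Real.exp (b * ρ)) * ‖u 0‖) * t := hmean
    _ ≤ ρ * (√(5 * Real.exp (b * ρ)) * ‖u 0‖) * b := by
        gcongr
        exact ht.2
    _ = _ := by ring

/-- If `u' ≈ i k u` at `0`, then `u t ≈ u 0 * exp (i k t)`: both amplitudes `u' ± i k u` are almost
constant after multiplication by `exp (∓ i k t)`. -/
theorem norm_exp_mul_sub_le (hu : SchrodingerSolution (fun t => -((k : ℂ) ^ 2 + r t)) u u')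
    (hk : 1 ≤ |k|) (hr : ∀ t ∈ Set.Icc 0 b, ‖r t‖ ≤ ρ) (ht : t ∈ Set.Icc 0 b)
    (hu₀ : ‖u' 0 - k * I * u 0‖ ≤ ‖u 0‖) :
    ‖Complex.exp (-(k * t * I)) * u t - u 0‖ ≤ wkbConst (b * ρ) / |k| * ‖u 0‖ := by
  have hk0 : (k : ℂ) ≠ 0 := ofReal_ne_zero.2 fun h => by norm_num [h] at hk
  have hu₀' : ‖u' 0‖ ≤ 2 * |k| * ‖u 0‖ := by
    have := norm_le_norm_add_norm_sub' (u' 0) (k * I * u 0)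
    rw [norm_mul, norm_mul, norm_I, mul_one, Complex.norm_real, Real.norm_eq_abs] at this
    nlinarith [norm_nonneg (u 0)]
  have hforward := hu.norm_exp_mul_sub_le_of_sq_eq hk rfl hr ht hu₀'
  have hbackward := hu.norm_exp_mul_sub_le_of_sq_eq hk (neg_sq k) hr ht hu₀'
  set e := Complex.exp (-(k * t * I)) with he
  set E := b * ρ * √(5 * Real.exp (b * ρ)) * ‖u 0‖ with hE
  have hnorm : ∀ m : ℝ, ‖Complex.exp (-(m * t * I))‖ = 1 := fun m => by
    rw [← ofReal_mul, ← neg_mul, ← ofReal_neg, norm_exp_ofReal_mul_I]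
  have hback : ‖e * (u' t - k * I * u t)‖ ≤ E + ‖u 0‖ := by
    have hneg : ∀ t, u' t + ((-k : ℝ) : ℂ) * I * u t = u' t - k * I * u t := fun t => by
      rw [ofReal_neg]
      ring
    rw [hneg, hneg] at hbackward
    calc ‖e * (u' t - k * I * u t)‖
        = ‖Complex.exp (-(((-k : ℝ) : ℂ) * t * I)) * (u' t - k * I * u t)‖ := by
          rw [norm_mul, norm_mul, he, hnorm, hnorm]
      _ ≤ ‖u' 0 - k * I * u 0‖ + E :=
          (norm_le_norm_add_norm_sub' _ _).trans (add_le_add le_rfl hbackward)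
      _ ≤ E + ‖u 0‖ := by linarith
  have hid : e * u t - u 0 = ((e * (u' t + k * I * u t) - (u' 0 + k * I * u 0))
      + (u' 0 - k * I * u 0) - e * (u' t - k * I * u t)) / (2 * k * I) := by
    rw [eq_div_iff (by simp [hk0])]
    ring
  have hden : ‖2 * (k : ℂ) * I‖ = 2 * |k| := by simp
  rw [hid, norm_div, hden, div_mul_eq_mul_div,
    div_le_div_iff₀ (by positivity) (one_pos.trans_le hk)]
  calc _ ≤ (E + ‖u 0‖ + (E + ‖u 0‖)) * |k| := by
        gcongr
        exact (norm_sub_le _ _).trans (add_le_add ((norm_add_le _ _).trans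
          (add_le_add hforward hu₀)) hback)
    _ = wkbConst (b * ρ) * ‖u 0‖ * (2 * |k|) := by
        rw [wkbConst, hE]
        ring

end SchrodingerSolution

theorem AirySolution.norm_exp_mul_sub_le {w w' : ℂ → ℂ} {k b t : ℝ} (hw : AirySolution w w')
    (hk : 1 ≤ |k|) (ht : t ∈ Set.Icc 0 b)
    (hlog : ‖w' ((k ^ 2 : ℝ) : ℂ) - k * w ((k ^ 2 : ℝ) : ℂ)‖ ≤ ‖w ((k ^ 2 : ℝ) : ℂ)‖) :
    ‖Complex.exp (-(k * t * I)) * w ((k ^ 2 : ℝ) + t * I) - w ((k ^ 2 : ℝ) : ℂ)‖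
      ≤ wkbConst (b * b) / |k| * ‖w ((k ^ 2 : ℝ) : ℂ)‖ := by
  have hline : SchrodingerSolution (fun t : ℝ => -((k : ℂ) ^ 2 + t * I))
      (fun t : ℝ => w ((k ^ 2 : ℝ) + t * I)) (fun t : ℝ => I * w' ((k ^ 2 : ℝ) + t * I)) := by
    convert! hw.restrict_line ((k ^ 2 : ℝ) : ℂ) I using 2 with s
    rw [I_sq, ofReal_pow]
    ring
  have := hline.norm_exp_mul_sub_le (ρ := b) hk (fun s hs => ?_) ht ?_
  · simpa using this
  · rw [norm_mul, norm_I, mul_one, Complex.norm_of_nonneg hs.1]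
    exact hs.2
  · simp only [ofReal_zero, zero_mul, add_zero]
    rwa [mul_right_comm, mul_comm _ I, ← mul_sub, norm_mul, norm_I, one_mul]

/-! ### The phase of the quotient of the dominant and the recessive solution -/

/-- The half-strip `Re z > 0`, `|Im z| < B`. -/
def rightHalfStrip (B : ℝ) : Set ℂ := {z | 0 < z.re ∧ |z.im| < B}

/-- `Ψ` is a continuous argument of `q` on `rightHalfStrip B`, normalized to vanish on the positive
real axis (where `q` is then positive). -/
structure IsPhaseOn (q : ℂ → ℂ) (B : ℝ) (Ψ : ℂ → ℝ) : Prop where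
  continuousOn : ContinuousOn Ψ (rightHalfStrip B)
  ofReal : ∀ x : ℝ, 0 < x → Ψ x = 0
  polar : ∀ z ∈ rightHalfStrip B, q z = ‖q z‖ * Complex.exp (Ψ z * I)

theorem add_mul_I_mem_rightHalfStrip {a t B : ℝ} (ha : 0 < a) (ht : 0 ≤ t) (htB : t < B) :
    (a : ℂ) + t * I ∈ rightHalfStrip B := by
  simpa [rightHalfStrip, abs_of_nonneg ht] using And.intro ha htB

theorem convex_rightHalfStrip (B : ℝ) : Convex ℝ (rightHalfStrip B) := by
  simp only [rightHalfStrip, abs_lt]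
  exact (convex_halfSpace_re_gt 0).inter
    ((convex_halfSpace_im_gt _).inter (convex_halfSpace_im_lt _))

theorem isOpen_rightHalfStrip (B : ℝ) : IsOpen (rightHalfStrip B) :=
  (isOpen_lt continuous_const continuous_re).inter
    (isOpen_lt (continuous_abs.comp continuous_im) continuous_const)

theorem abs_lt_pi_div_two_of_cos_pos {φ : ℝ → ℝ} {s t : ℝ}
    (hφ : ContinuousOn φ (Set.uIcc s t)) (h0 : φ s = 0)
    (hcos : ∀ u ∈ Set.uIcc s t, 0 < Real.cos (φ u)) : |φ t| < π / 2 := by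
  by_contra! hge
  have hivt : Set.uIcc 0 (φ t) ⊆ φ '' Set.uIcc s t := h0 ▸ intermediate_value_uIcc hφ
  rcases le_abs.1 hge with hpos | hneg
  · obtain ⟨u, hu, hu'⟩ := hivt (Set.mem_uIcc_of_le (by positivity) hpos)
    simpa [hu'] using hcos u hu
  · obtain ⟨u, hu, hu'⟩ := hivt (Set.mem_uIcc_of_ge (le_neg_of_le_neg hneg)
      (neg_nonpos.2 Real.pi_div_two_pos.le))
    simpa [hu'] using hcos u hu

theorem eq_of_exp_mul_I_eq_one {θ : ℝ → ℝ} {s t : ℝ} (hθ : ContinuousOn θ (Set.uIcc s t))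
    (hexp : ∀ u ∈ Set.uIcc s t, Complex.exp (θ u * I) = 1) : θ t = θ s := by
  have hcos : ∀ u ∈ Set.uIcc s t, Real.cos (θ u - θ s) = 1 := fun u hu => by
    rw [← Complex.exp_ofReal_mul_I_re, ofReal_sub, sub_mul, Complex.exp_sub, hexp u hu,
      hexp s Set.left_mem_uIcc, div_one, one_re]
  have habs : -(π / 2) < θ t - θ s ∧ θ t - θ s < π / 2 := abs_lt.1 <|
    abs_lt_pi_div_two_of_cos_pos (φ := fun u => θ u - θ s) (hθ.sub continuousOn_const)
      (sub_self (θ s)) fun u hu => (hcos u hu).symm ▸ one_pos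
  refine sub_eq_zero.1 ((Real.cos_eq_one_iff_of_lt_of_lt ?_ ?_).1 (hcos t Set.right_mem_uIcc)) <;>
    linarith [Real.pi_pos]

theorem exists_continuousOn_polar {S : Set ℂ} {q : ℂ → ℂ} (hS : IsSimplyConnected S)
    (hSo : IsOpen S) (hq : ContinuousOn q S) (hq0 : ∀ z ∈ S, q z ≠ 0) :
    ∃ θ : ℂ → ℝ, ContinuousOn θ S ∧ ∀ z ∈ S, q z = ‖q z‖ * Complex.exp (θ z * I) := by
  obtain ⟨L, hLc, hL⟩ := Complex.exists_continuousOn_eqOn_exp_comp hS hSo hq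
    fun ⟨z, hz, hz0⟩ => hq0 z hz hz0
  refine ⟨fun z => (L z).im, continuous_im.comp_continuousOn hLc, fun z hz => ?_⟩
  rw [← show Complex.exp (L z) = q z from hL hz, Complex.norm_exp, ofReal_exp, ← Complex.exp_add,
    re_add_im]

theorem exists_isPhaseOn {q : ℂ → ℂ} {B : ℝ} (hB : 0 < B)
    (hq : ContinuousOn q (rightHalfStrip B)) (hq0 : ∀ z ∈ rightHalfStrip B, q z ≠ 0)
    (hpos : ∀ x : ℝ, 0 < x → ∃ r : ℝ, 0 < r ∧ q x = r) : ∃ Ψ, IsPhaseOn q B Ψ := by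
  have hmem : ∀ x : ℝ, 0 < x → (x : ℂ) ∈ rightHalfStrip B := fun x hx => by
    simpa using add_mul_I_mem_rightHalfStrip hx le_rfl hB
  have hsc : IsSimplyConnected (rightHalfStrip B) := by
    have := (convex_rightHalfStrip B).contractibleSpace ⟨_, hmem 1 one_pos⟩
    exact (inferInstance : SimplyConnectedSpace (rightHalfStrip B))
  obtain ⟨θ, hθ, hpolar⟩ := exists_continuousOn_polar hsc (isOpen_rightHalfStrip B) hq hq0
  have hexp : ∀ x : ℝ, 0 < x → Complex.exp (θ x * I) = 1 := fun x hx => by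
    obtain ⟨r, hr, hqr⟩ := hpos x hx
    have := hpolar x (hmem x hx)
    rw [hqr, Complex.norm_of_nonneg hr.le] at this
    exact mul_left_cancel₀ (ofReal_ne_zero.2 hr.ne') (by rw [← this, mul_one])
  refine ⟨fun z => θ z - θ (1 : ℝ), hθ.sub continuousOn_const, fun x hx => sub_eq_zero.2 ?_,
    fun z hz => ?_⟩
  · have huIcc : ∀ u ∈ Set.uIcc 1 x, 0 < u := fun u hu => (lt_min one_pos hx).trans_le hu.1
    exact eq_of_exp_mul_I_eq_one (θ := fun u : ℝ => θ u) (hθ.comp continuous_ofReal.continuousOn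
      fun u hu => hmem u (huIcc u hu)) fun u hu => hexp u (huIcc u hu)
  · rw [ofReal_sub, sub_mul, Complex.exp_sub, hexp 1 one_pos, div_one]
    exact hpolar z hz

theorem re_div_pos {z w : ℂ} {x y : ℝ} (hz : ‖z - x‖ < x / 2) (hw : ‖w - y‖ < y / 2) :
    0 < (z / w).re := by
  have hx : 0 < x / 2 := (norm_nonneg _).trans_lt hz
  have hy : 0 < y / 2 := (norm_nonneg _).trans_lt hw
  have hzre := abs_lt.1 ((Complex.abs_re_le_norm _).trans_lt hz)
  have hzim := (Complex.abs_im_le_norm _).trans_lt hz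
  have hwre := abs_lt.1 ((Complex.abs_re_le_norm _).trans_lt hw)
  have hwim := (Complex.abs_im_le_norm _).trans_lt hw
  simp only [sub_re, sub_im, Complex.ofReal_re, ofReal_im, sub_zero] at hzre hzim hwre hwim
  have hre : x / 2 * (y / 2) < z.re * w.re := mul_lt_mul'' (by linarith) (by linarith) hx.le hy.le
  have him : |z.im * w.im| < x / 2 * (y / 2) := by
    rw [abs_mul]
    exact mul_lt_mul'' hzim hwim (abs_nonneg _) (abs_nonneg _)
  have hw0 : w ≠ 0 := fun h => by
    rw [h, zero_re] at hwre
    linarith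
  rw [Complex.div_re, ← add_div]
  exact div_pos (by linarith [neg_abs_le (z.im * w.im)]) (normSq_pos.2 hw0)

namespace IsPhaseOn

variable {q : ℂ → ℂ} {Ψ : ℂ → ℝ} {a b B : ℝ}

theorem continuousOn_vertical (h : IsPhaseOn q B Ψ) (ha : 0 < a) (hbB : b < B) :
    ContinuousOn (fun t : ℝ => Ψ (a + t * I)) (Set.Icc 0 b) :=
  h.continuousOn.comp (by fun_prop) fun _ ht =>
    add_mul_I_mem_rightHalfStrip ha ht.1 (ht.2.trans_lt hbB)

theorem continuousOn_horizontal (h : IsPhaseOn q B Ψ) (ha : 0 < a) (hb : 0 ≤ b) (hbB : b < B) :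
    ContinuousOn (fun x : ℝ => Ψ (x + b * I)) (Set.Ici a) :=
  h.continuousOn.comp (by fun_prop) fun _ hx =>
    add_mul_I_mem_rightHalfStrip (ha.trans_le hx) hb hbB

theorem im_eq_zero (h : IsPhaseOn q B Ψ) {z : ℂ} (hz : z ∈ rightHalfStrip B)
    (hsin : Real.sin (Ψ z) = 0) : (q z).im = 0 := by
  rw [h.polar z hz, im_ofReal_mul, exp_ofReal_mul_I_im, hsin, mul_zero]

theorem abs_sub_lt_pi_div_two (h : IsPhaseOn q B Ψ) (ha : 0 < a) (hb : 0 ≤ b) (hbB : b < B)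
    {k : ℝ} (hre : ∀ t ∈ Set.Icc 0 b, 0 < (Complex.exp (-(k * t * I)) * q (a + t * I)).re) :
    |Ψ (a + b * I) - k * b| < π / 2 := by
  rw [← Set.uIcc_of_le hb] at hre
  refine abs_lt_pi_div_two_of_cos_pos (φ := fun t : ℝ => Ψ (a + t * I) - k * t) (s := 0) ?_
    (by simp [h.ofReal a ha]) fun t ht => ?_
  · rw [Set.uIcc_of_le hb]
    exact (h.continuousOn_vertical ha hbB).sub (by fun_prop)
  · rw [Set.uIcc_of_le hb] at ht hre
    have hpos := hre t ht
    rw [h.polar _ (add_mul_I_mem_rightHalfStrip ha ht.1 (ht.2.trans_lt hbB)), mul_left_comm,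
      ← Complex.exp_add, neg_add_eq_sub, ← sub_mul, re_ofReal_mul, ← ofReal_mul, ← ofReal_sub,
      exp_ofReal_mul_I_re] at hpos
    exact pos_of_mul_pos_right hpos (norm_nonneg _)

end IsPhaseOn

/-- A continuous function tending to infinity attains each of the levels `c k` for a first time, and
the times of first attainment increase to infinity. -/
theorem exists_strictMono_hitting {θ : ℝ → ℝ} {a₀ : ℝ} {c : ℕ → ℝ}
    (hθ : ContinuousOn θ (Set.Ici a₀)) (hlim : Filter.Tendsto θ Filter.atTop Filter.atTop)
    (hc : StrictMono c) (hctop : Filter.Tendsto c Filter.atTop Filter.atTop) (h0 : θ a₀ < c 0) :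
    ∃ s : ℕ → ℝ, StrictMono s ∧ (∀ k, a₀ ≤ s k) ∧ (∀ k, θ (s k) = c k) ∧
      Filter.Tendsto s Filter.atTop Filter.atTop := by
  have hlt : ∀ k, θ a₀ < c k := fun k => h0.trans_le (hc.monotone (Nat.zero_le k))
  have hfirst : ∀ k, ∃ x, IsLeast (Set.Ici a₀ ∩ θ ⁻¹' {c k}) x := fun k =>
    have hbdd : BddBelow (Set.Ici a₀ ∩ θ ⁻¹' {c k}) := bddBelow_Ici.mono Set.inter_subset_left
    have hne : (Set.Ici a₀ ∩ θ ⁻¹' {c k}).Nonempty :=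
      isPreconnected_Ici.intermediate_value_Ici Set.self_mem_Ici
        (Filter.le_principal_iff.2 (Filter.Ici_mem_atTop a₀)) hθ hlim (hlt k).le
    ⟨_, (hθ.preimage_isClosed_of_isClosed isClosed_Ici isClosed_singleton).isLeast_csInf hne hbdd⟩
  choose s hs using hfirst
  have hmono : StrictMono s := strictMono_nat_of_lt_succ fun k => by
    obtain ⟨x, hx, hxc⟩ := intermediate_value_Ico (hs (k + 1)).1.1
      (hθ.mono Set.Icc_subset_Ici_self) ⟨(hlt k).le, (hs (k + 1)).1.2 ▸ hc (Nat.lt_succ_self k)⟩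
    exact ((hs k).2 ⟨hx.1, hxc⟩).trans_lt hx.2
  refine ⟨s, hmono, fun k => (hs k).1.1, fun k => (hs k).1.2, ?_⟩
  refine (tendsto_atTop_of_monotone hmono.monotone).resolve_right fun ⟨l, hl⟩ => ?_
  have hl₀ : a₀ ≤ l := ge_of_tendsto' hl fun k => (hs k).1.1
  have hθl := (hθ l hl₀).tendsto.comp
    (tendsto_nhdsWithin_iff.2 ⟨hl, Filter.Eventually.of_forall fun k => (hs k).1.1⟩)
  exact not_tendsto_nhds_of_tendsto_atTop (hctop.congr fun k => (hs k).1.2.symm) _ hθl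

theorem AirySolution.norm_exp_mul_sub_re_lt {w w' : ℂ → ℂ} {a b k t : ℝ} (hw : AirySolution w w')
    (hk : k ^ 2 = a) (hkb : 2 * wkbConst (b * b) < |k|) (ht : t ∈ Set.Icc 0 b)
    (hre : ((w a).re : ℂ) = w a ∧ ((w' a).re : ℂ) = w' a) (hpos : 0 < (w a).re)
    (hlog : |(w' a).re - k * (w a).re| ≤ (w a).re) :
    ‖Complex.exp (-(k * t * I)) * w (a + t * I) - (w a).re‖ < (w a).re / 2 := by
  subst hk
  have hwkb := one_le_wkbConst (mul_self_nonneg b)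
  have hk₀ : 0 < |k| := by linarith
  have hnorm : ‖w (k ^ 2 : ℝ)‖ = (w (k ^ 2 : ℝ)).re := by
    rw [← hre.1, Complex.norm_of_nonneg hpos.le, Complex.ofReal_re]
  have hlog' : ‖w' (k ^ 2 : ℝ) - k * w (k ^ 2 : ℝ)‖ ≤ ‖w (k ^ 2 : ℝ)‖ := by
    rwa [hnorm, ← hre.1, ← hre.2, ← ofReal_mul, ← ofReal_sub, Complex.norm_real]
  rw [hre.1]
  calc _ ≤ wkbConst (b * b) / |k| * ‖w (k ^ 2 : ℝ)‖ :=
        hw.norm_exp_mul_sub_le (by linarith) ht hlog'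
    _ < 1 / 2 * ‖w (k ^ 2 : ℝ)‖ := by
        refine mul_lt_mul_of_pos_right ?_ (hnorm ▸ hpos)
        rw [div_lt_div_iff₀ hk₀ two_pos]
        linarith
    _ = _ := by rw [hnorm, one_div_mul_eq_div]

/-- The determinant of the two conditions `w (a ± b i) = 0` on a combination `w` of `f` and `g`. -/
def verticalDet (f g : ℂ → ℂ) (b : ℝ) (a : ℂ) : ℂ :=
  f (a + b * I) * g (a - b * I) - g (a + b * I) * f (a - b * I)

namespace AiryBasis

variable {f f' g g' : ℂ → ℂ} {a b c B : ℝ}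

theorem verticalDet_eq_zero_iff (h : AiryBasis f f' g g') {z : ℂ} : verticalDet f g b z = 0 ↔
    ∃ α β : ℂ, ¬(α = 0 ∧ β = 0) ∧ α * f (z + b * I) + β * g (z + b * I) = 0 ∧
      α * f (z - b * I) + β * g (z - b * I) = 0 := by
  rw [verticalDet]
  refine ⟨fun hdet => ⟨g (z - b * I), -f (z - b * I), fun ⟨hg, hf⟩ => ?_,
    by linear_combination hdet, by ring⟩, fun ⟨α, β, hαβ, hup, hdown⟩ => ?_⟩
  · have := h.wronskian (z - b * I)
    simp [hg, neg_eq_zero.1 hf] at this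
  · by_contra hdet
    refine hαβ ⟨(mul_eq_zero.1 ?_).resolve_right hdet, (mul_eq_zero.1 ?_).resolve_right hdet⟩
    · linear_combination g (z - b * I) * hup - g (z + b * I) * hdown
    · linear_combination f (z + b * I) * hdown - f (z - b * I) * hup

theorem verticalDet_ne_zero (h : AiryBasis f f' g g') (hb : 0 < b) (ha : a < 1 / (4 * b ^ 2)) :
    verticalDet f g b a ≠ 0 := fun hdet =>
  have ⟨_, _, hne, hup, hdown⟩ := h.verticalDet_eq_zero_iff.1 hdet
  hne (h.eq_zero_of_vertical hb ha hup hdown)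

theorem verticalDet_eq_zero_of_im_div_eq_zero (h : AiryBasis f f' g g')
    (hv : f (a + b * I) - c * g (a + b * I) ≠ 0)
    (him : (g (a + b * I) / (f (a + b * I) - c * g (a + b * I))).im = 0) :
    verticalDet f g b a = 0 := by
  have hconj : (a : ℂ) - b * I = starRingEnd ℂ (a + b * I) := by
    simp [sub_eq_add_neg]
  rw [verticalDet, hconj, (h.conj_left _).1, (h.conj_right _).1]
  have hreal := conj_eq_iff_im.2 him
  rw [map_div₀, div_eq_div_iff ((map_ne_zero _).2 hv) hv] at hreal
  simp only [map_sub, map_mul, conj_ofReal] at hreal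
  linear_combination hreal

theorem exists_phase (h : AiryBasis f f' g g') {v' : ℂ → ℂ}
    (hv : EntireRecessiveSolution (fun z => f z - c * g z) v') (hB₀ : 0 < B)
    (hB : ∀ r ∈ rayZeroModuli g, B ≤ √3 / 2 * r) :
    ∃ Ψ, IsPhaseOn (fun z => g z / (f z - c * g z)) B Ψ :=
  exists_isPhaseOn hB₀
    (h.right.differentiable.continuous.continuousOn.div hv.differentiable.continuous.continuousOn
      fun z hz => hv.ne_zero hz.1)
    (fun z hz => div_ne_zero (h.right_ne_zero hB hz.1 hz.2) (hv.ne_zero hz.1))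
    fun x hx => ⟨_, div_pos (h.re_ofReal.right_pos hx) (hv.re_ofReal.pos x hx), by
      rw [ofReal_div, (h.ofReal_re_right x).1, (hv.ofReal_re x).1]⟩

variable {Ψ : ℂ → ℝ} {v' : ℂ → ℂ}

theorem verticalDet_eq_zero_of_sin_phase_eq_zero (h : AiryBasis f f' g g')
    (hv : EntireRecessiveSolution (fun z => f z - c * g z) v')
    (hΨ : IsPhaseOn (fun z => g z / (f z - c * g z)) B Ψ) (ha : 0 < a) (hb : 0 ≤ b) (hbB : b < B)
    (hsin : Real.sin (Ψ (a + b * I)) = 0) : verticalDet f g b a = 0 :=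
  have hz := add_mul_I_mem_rightHalfStrip ha hb hbB
  h.verticalDet_eq_zero_of_im_div_eq_zero (hv.ne_zero hz.1) (hΨ.im_eq_zero hz hsin)

theorem phase_lt_pi (h : AiryBasis f f' g g')
    (hv : EntireRecessiveSolution (fun z => f z - c * g z) v')
    (hΨ : IsPhaseOn (fun z => g z / (f z - c * g z)) B Ψ) (ha : 0 < a) (hb : 0 < b) (hbB : b < B)
    (hab : a < 1 / (4 * b ^ 2)) : Ψ (a + b * I) < π := by
  by_contra! hge
  have h0 : Ψ (a + (0 : ℝ) * I) = 0 := by simpa using hΨ.ofReal a ha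
  obtain ⟨t, ht, hπ⟩ := intermediate_value_Icc hb.le (hΨ.continuousOn_vertical ha hbB)
    ⟨h0.trans_le Real.pi_pos.le, hge⟩
  have ht₀ : 0 < t := ht.1.lt_of_ne fun h => Real.pi_ne_zero (by rw [← hπ, ← h]; exact h0)
  have hat : a < 1 / (4 * t ^ 2) := hab.trans_le (by gcongr; exact ht.2)
  exact h.verticalDet_ne_zero ht₀ hat (h.verticalDet_eq_zero_of_sin_phase_eq_zero hv hΨ ha ht₀.le
    (ht.2.trans_lt hbB) (by rw [show Ψ (a + t * I) = π from hπ, Real.sin_pi]))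

/-- By the WKB approximation `g / v` behaves like `exp (2 i b √a)` on the segment from `a` to
`a + b i`. -/
theorem abs_phase_sub_lt (h : AiryBasis f f' g g')
    (hv : EntireRecessiveSolution (fun z => f z - c * g z) v')
    (hΨ : IsPhaseOn (fun z => g z / (f z - c * g z)) B Ψ) (hb : 0 ≤ b) (hbB : b < B)
    (ha : 2 * wkbConst (b * b) < √a) : |Ψ (a + b * I) - 2 * √a * b| < π / 2 := by
  have hwkb := one_le_wkbConst (mul_self_nonneg b)
  have hk : 1 ≤ √a := by linarith
  have ha₁ : 1 ≤ a := by simpa using hk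
  have ha₀ : 0 < a := one_pos.trans_le ha₁
  have hsq : √a ^ 2 = a := Real.sq_sqrt ha₀.le
  have habs : |√a| = √a := abs_of_nonneg (Real.sqrt_nonneg a)
  refine hΨ.abs_sub_lt_pi_div_two ha₀ hb hbB fun t ht => ?_
  have hgrowing := h.right.norm_exp_mul_sub_re_lt hsq (by rwa [habs]) ht (h.ofReal_re_right a)
    (h.re_ofReal.right_pos ha₀) (h.re_ofReal.abs_deriv_right_sub_sqrt_mul_le ha₁)
  have hdecaying := AirySolution.norm_exp_mul_sub_re_lt (k := -√a) hv.toSchrodingerSolution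
    (by rw [neg_sq, hsq]) (by rwa [abs_neg, habs]) ht (hv.ofReal_re a) (hv.re_ofReal.pos a ha₀)
    (by simpa [sub_neg_eq_add] using hv.re_ofReal.abs_deriv_add_sqrt_mul_le ha₁)
  convert! re_div_pos hgrowing hdecaying using 2
  rw [mul_div_mul_comm, ← Complex.exp_sub]
  congr 2
  push_cast
  ring

theorem exists_seq_verticalDet_eq_zero (h : AiryBasis f f' g g') (hb : 0 < b) (hbB : b < B)
    (hB : ∀ r ∈ rayZeroModuli g, B ≤ √3 / 2 * r) :
    ∃ s : ℕ → ℝ, StrictMono s ∧ (∀ k, 0 < s k) ∧ Filter.Tendsto s Filter.atTop Filter.atTop ∧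
      (∀ k, verticalDet f g b (s k) = 0) ∧
      ∀ᶠ k : ℕ in Filter.atTop, |(k + 1) * π - 2 * √(s k) * b| < π / 2 := by
  obtain ⟨c, hv⟩ := h.exists_entireRecessive
  obtain ⟨Ψ, hΨ⟩ := h.exists_phase hv (hb.trans hbB) hB
  have ha₀ : 0 < 1 / (8 * b ^ 2) := by positivity
  have hstart : Ψ ((1 / (8 * b ^ 2) : ℝ) + b * I) < ((0 : ℕ) + 1) * π := by
    simpa using h.phase_lt_pi hv hΨ ha₀ hb hbB (by gcongr; norm_num)
  have hasymp : ∀ᶠ a : ℝ in Filter.atTop, |Ψ (a + b * I) - 2 * √a * b| < π / 2 :=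
    (Real.tendsto_sqrt_atTop.eventually_gt_atTop _).mono fun a ha =>
      h.abs_phase_sub_lt hv hΨ hb.le hbB ha
  have hsqrt : Filter.Tendsto (fun a => 2 * √a * b - π / 2) Filter.atTop Filter.atTop :=
    Filter.tendsto_atTop_add_const_right _ _
      ((Real.tendsto_sqrt_atTop.const_mul_atTop two_pos).atTop_mul_const hb)
  have hlim : Filter.Tendsto (fun a : ℝ => Ψ (a + b * I)) Filter.atTop Filter.atTop :=
    Filter.tendsto_atTop_mono' _ (hasymp.mono fun a ha => by linarith [(abs_lt.1 ha).1]) hsqrt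
  obtain ⟨s, hs, hs₀, hsπ, hs_top⟩ := exists_strictMono_hitting
    (c := fun k : ℕ => ((k : ℝ) + 1) * π) (hΨ.continuousOn_horizontal ha₀ hb.le hbB) hlim
    (fun k l hkl => by beta_reduce; gcongr) ((Filter.tendsto_atTop_add_const_right _ _
      tendsto_natCast_atTop_atTop).atTop_mul_const Real.pi_pos) hstart
  have hpos : ∀ k, 0 < s k := fun k => ha₀.trans_le (hs₀ k)
  refine ⟨s, hs, hpos, hs_top, fun k => ?_, (hs_top.eventually hasymp).mono fun k hk => hsπ k ▸ hk⟩
  refine h.verticalDet_eq_zero_of_sin_phase_eq_zero hv hΨ (hpos k) hb.le hbB ?_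
  rw [hsπ k]
  exact_mod_cast Real.sin_nat_mul_pi (k + 1)

end AiryBasis

/-! ### Counting zeros with Jensen's formula -/

theorem one_le_divisor_of_eq_zero {F : ℂ → ℂ} (hF : Differentiable ℂ F) {c u : ℂ} (hc : F c ≠ 0)
    {U : Set ℂ} (huU : u ∈ U) (hu : F u = 0) : 1 ≤ MeromorphicOn.divisor F U u := by
  have han : ∀ V : Set ℂ, AnalyticOnNhd ℂ F V := fun V z _ => hF.analyticAt z
  rw [MeromorphicOn.AnalyticOnNhd.divisor_apply (han U) huU]
  have hzero : analyticOrderAt F u ≠ 0 := (hF.analyticAt u).analyticOrderAt_ne_zero.2 hu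
  have htop : analyticOrderAt F u ≠ ⊤ :=
    (han Set.univ).analyticOrderAt_ne_top_of_isPreconnected isPreconnected_univ
      (Set.mem_univ c) (Set.mem_univ u)
      (by simp [(hF.analyticAt c).analyticOrderAt_eq_zero.2 hc])
  lift analyticOrderAt F u to ℕ using htop with m
  simpa using Nat.one_le_iff_ne_zero.2 (by simpa using hzero : m ≠ 0)

theorem log_div_norm_nonneg {u : ℂ} {R : ℝ} (hu : ‖u‖ ≤ R) : 0 ≤ Real.log (R / ‖u‖) := by
  rcases (norm_nonneg u).eq_or_lt with h | h
  · simp [← h]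
  · exact Real.log_nonneg ((one_le_div h).2 hu)

theorem sum_log_div_norm_le_circleAverage {F : ℂ → ℂ} (hF : Differentiable ℂ F) (h0 : F 0 ≠ 0)
    {R : ℝ} (hR : 0 < R) {Z : Finset ℂ} (hZ : ∀ u ∈ Z, F u = 0 ∧ ‖u‖ ≤ R) :
    ∑ u ∈ Z, Real.log (R / ‖u‖) + Real.log ‖F 0‖ ≤ circleAverage (Real.log ‖F ·‖) 0 R := by
  have han : AnalyticOnNhd ℂ F (Metric.closedBall 0 |R|) := fun z _ => hF.analyticAt z
  rw [han.circleAverage_log_norm hR.ne' h0]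
  set d := MeromorphicOn.divisor F (Metric.closedBall 0 |R|)
  have hmem : ∀ u : ℂ, u ∈ Metric.closedBall 0 |R| ↔ ‖u‖ ≤ R := fun u => by
    rw [mem_closedBall_zero_iff, abs_of_pos hR]
  have hfinite : (Function.support fun u => d u * Real.log (R * ‖0 - u‖⁻¹)).Finite :=
    (d.finiteSupport (isCompact_closedBall 0 |R|)).subset fun u hu hd => hu (by simp [hd])
  have hnonneg : ∀ u, 0 ≤ d u * Real.log (R * ‖0 - u‖⁻¹) := fun u => by
    rw [zero_sub, norm_neg, ← div_eq_mul_inv]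
    by_cases hu : d u = 0
    · simp [hu]
    · exact mul_nonneg (mod_cast MeromorphicOn.AnalyticOnNhd.divisor_nonneg han u)
        (log_div_norm_nonneg ((hmem u).1 (d.supportWithinDomain hu)))
  gcongr
  calc ∑ u ∈ Z, Real.log (R / ‖u‖) ≤ ∑ u ∈ Z, d u * Real.log (R * ‖0 - u‖⁻¹) := by
        refine Finset.sum_le_sum fun u hu => ?_
        rw [zero_sub, norm_neg, ← div_eq_mul_inv]
        exact le_mul_of_one_le_left (log_div_norm_nonneg (hZ u hu).2)
          (mod_cast one_le_divisor_of_eq_zero hF h0 ((hmem u).2 (hZ u hu).2) (hZ u hu).1)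
    _ ≤ ∑ u ∈ Z ∪ hfinite.toFinset, d u * Real.log (R * ‖0 - u‖⁻¹) :=
        Finset.sum_le_sum_of_subset_of_nonneg Finset.subset_union_left fun u _ _ => hnonneg u
    _ = ∑ᶠ u, d u * Real.log (R * ‖0 - u‖⁻¹) :=
        (finsum_eq_sum_of_support_subset _ (by simp)).symm

theorem circleAverage_log_norm_le {F : ℂ → ℂ} (hF : Differentiable ℂ F) {c : ℂ} (hc : F c ≠ 0)
    {R : ℝ} (hR : R ≠ 0) {β : ℝ → ℝ} (hβ : Continuous β)
    (hle : ∀ θ ∈ Set.Icc 0 (2 * π), ‖F (circleMap 0 R θ)‖ ≤ Real.exp (β θ)) :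
    circleAverage (Real.log ‖F ·‖) 0 R ≤ (2 * π)⁻¹ * ∫ θ in 0..2 * π, β θ := by
  have han : ∀ U : Set ℂ, AnalyticOnNhd ℂ F U := fun U z _ => hF.analyticAt z
  have hne : ∀ᶠ θ in Filter.codiscreteWithin (Set.Icc 0 (2 * π)), F (circleMap 0 R θ) ≠ 0 :=
    Filter.codiscreteWithin_mono (Set.subset_univ _) <| circleMap_preimage_codiscrete hR <|
      Filter.codiscreteWithin_mono (Set.subset_univ _)
        ((han Set.univ).preimage_zero_mem_codiscrete hc)
  rw [circleAverage_def, smul_eq_mul]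
  gcongr
  refine intervalIntegral.integral_mono_ae_restrict Real.two_pi_pos.le
    (han (Metric.sphere 0 |R|)).meromorphicOn.circleIntegrable_log_norm
    (hβ.intervalIntegrable _ _) ?_
  filter_upwards [ae_restrict_le_codiscreteWithin measurableSet_Icc hne,
    ae_restrict_mem measurableSet_Icc] with θ hθ hmem
  exact (Real.log_le_iff_le_exp (norm_pos_iff.2 hθ)).2 (hle θ hmem)

/-- The entire functions of order `1/2` whose growth matches positive zeros at about `k²`. -/
def HasSineGrowth (F : ℂ → ℂ) (C : ℝ) : Prop :=
  ∀ r θ : ℝ, 1 ≤ r → θ ∈ Set.Icc 0 (2 * π) →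
    ‖F (circleMap 0 (r ^ 2) θ)‖ ≤ C / r * Real.exp (π * r * Real.sin (θ / 2))

theorem integral_const_add_mul_sin_half (α β : ℝ) :
    ∫ θ in 0..2 * π, (α + β * Real.sin (θ / 2)) = 2 * π * α + 4 * β := by
  have hsin : Continuous fun θ : ℝ => β * Real.sin (θ / 2) := by fun_prop
  rw [intervalIntegral.integral_add intervalIntegrable_const (hsin.intervalIntegrable _ _),
    intervalIntegral.integral_const_mul,
    intervalIntegral.integral_comp_div (fun t => Real.sin t) two_ne_zero]
  simp only [intervalIntegral.integral_const, sub_zero, smul_eq_mul, zero_div,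
    mul_div_cancel_left₀ π two_ne_zero, integral_sin, Real.cos_zero, Real.cos_pi, sub_neg_eq_add]
  ring

theorem circleAverage_log_norm_le_of_hasSineGrowth {F : ℂ → ℂ} (hF : Differentiable ℂ F)
    (h0 : F 0 ≠ 0) {C r : ℝ} (hC : 0 < C) (hgrowth : HasSineGrowth F C) (hr : 1 ≤ r) :
    circleAverage (Real.log ‖F ·‖) 0 (r ^ 2) ≤ Real.log C - Real.log r + 2 * r := by
  have hr0 : 0 < r := one_pos.trans_le hr
  refine (circleAverage_log_norm_le hF h0 (by positivity)
    (β := fun θ => Real.log (C / r) + π * r * Real.sin (θ / 2)) (by fun_prop)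
    fun θ hθ => ?_).trans_eq ?_
  · rw [Real.exp_add, Real.exp_log (by positivity)]
    exact hgrowth r θ hr hθ
  · rw [integral_const_add_mul_sin_half, Real.log_div hC.ne' hr0.ne']
    field_simp
    ring

theorem log_le_of_hasSineGrowth {F : ℂ → ℂ} (hF : Differentiable ℂ F) (h0 : F 0 ≠ 0)
    {C r : ℝ} (hC : 0 < C) (hgrowth : HasSineGrowth F C) (hr : 1 ≤ r) {μ : ℕ → ℝ}
    (hμ : StrictMono μ) (hpos : ∀ k, 0 < μ k) (hzero : ∀ k, F (μ k) = 0) {n : ℕ}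
    (hn : ∀ k < n, μ k ≤ r ^ 2) {z : ℂ} (hz : F z = 0) (hzr : ‖z‖ ≤ r ^ 2)
    (hzμ : z ∉ Set.range fun k => (μ k : ℂ)) :
    (2 * n + 3) * Real.log r + Real.log ‖F 0‖ ≤
      Real.log C + 2 * r + Real.log ‖z‖ + ∑ k ∈ Finset.range n, Real.log (μ k) := by
  have hr0 : 0 < r := one_pos.trans_le hr
  have hznorm : ‖z‖ ≠ 0 := norm_ne_zero_iff.2 fun h => h0 (h ▸ hz)
  have hnorm : ∀ k, ‖(μ k : ℂ)‖ = μ k := fun k => Complex.norm_of_nonneg (hpos k).le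
  have hjensen := (sum_log_div_norm_le_circleAverage hF h0 (pow_pos hr0 2)
    (Z := insert z ((Finset.range n).image fun k => (μ k : ℂ))) fun u hu => ?_).trans
    (circleAverage_log_norm_le_of_hasSineGrowth hF h0 hC hgrowth hr)
  · have hznin : z ∉ (Finset.range n).image fun k => (μ k : ℂ) := fun h =>
      have ⟨k, _, hk⟩ := Finset.mem_image.1 h
      hzμ ⟨k, hk⟩
    rw [Finset.sum_insert hznin, Finset.sum_image fun k _ l _ hkl =>
      hμ.injective (Complex.ofReal_injective hkl)] at hjensen
    simp only [hnorm, Real.log_div (pow_pos hr0 2).ne' hznorm,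
      Real.log_div (pow_pos hr0 2).ne' (hpos _).ne', Real.log_pow, Finset.sum_sub_distrib,
      Finset.sum_const, Finset.card_range, nsmul_eq_mul] at hjensen
    push_cast at hjensen
    linarith
  · rcases Finset.mem_insert.1 hu with rfl | hu
    · exact ⟨hz, hzr⟩
    · obtain ⟨k, hk, rfl⟩ := Finset.mem_image.1 hu
      exact ⟨hzero k, (hnorm k).trans_le (hn k (Finset.mem_range.1 hk))⟩

theorem sum_log_half_le (n : ℕ) : ∑ k ∈ Finset.range n, Real.log ((k : ℝ) + 3 / 2) ≤
    (n + 1) * Real.log (n + 1 / 2) - (n + 1 / 2) + (1 / 2 + Real.log 2) := by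
  induction n with
  | zero =>
    simp only [Finset.range_zero, Finset.sum_empty, Nat.cast_zero, zero_add, one_div,
      Real.log_inv, one_mul]
    linarith
  | succ n ih =>
    have hn : (0 : ℝ) < n + 1 / 2 := by positivity
    have hquot : 1 + 1 / ((n : ℝ) + 1 / 2) = (n + 3 / 2) / (n + 1 / 2) := by
      field_simp
      ring
    have hlow : 2 * (1 / ((n : ℝ) + 1 / 2)) / (1 / ((n : ℝ) + 1 / 2) + 2) = 1 / (n + 1) := by
      field_simp
      ring
    have hstep := Real.le_log_one_add_of_nonneg (x := 1 / ((n : ℝ) + 1 / 2)) (by positivity)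
    rw [hquot, hlow, Real.log_div (by positivity) hn.ne', div_le_iff₀ (by positivity)] at hstep
    have hshift : (n : ℝ) + 1 + 1 / 2 = n + 3 / 2 := by ring
    rw [Finset.sum_range_succ]
    push_cast
    rw [hshift]
    nlinarith

theorem exists_sum_range_le_sum_range_add {a b : ℕ → ℝ} (h : ∀ᶠ k in Filter.atTop, a k ≤ b k) :
    ∃ E, ∀ n, ∑ k ∈ Finset.range n, a k ≤ ∑ k ∈ Finset.range n, b k + E := by
  obtain ⟨K, hK⟩ := Filter.eventually_atTop.1 h
  have hbdd : Filter.IsBoundedUnder (· ≤ ·) Filter.atTop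
      fun n => ∑ k ∈ Finset.range n, (a k - b k) := by
    refine ⟨∑ k ∈ Finset.range K, (a k - b k), Filter.eventually_map.2 ?_⟩
    filter_upwards [Filter.eventually_ge_atTop K] with n hn
    induction n, hn using Nat.le_induction with
    | base => rfl
    | succ n hn ih =>
      rw [Finset.sum_range_succ]
      linarith [hK n hn]
  obtain ⟨E, hE⟩ := hbdd.bddAbove_range
  refine ⟨E, fun n => ?_⟩
  have := hE ⟨n, rfl⟩
  simp only [Finset.sum_sub_distrib] at this
  linarith

/-- Jensen's formula leaves no room for a zero besides the `μ k`: one more would contribute another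
`2 log r` to a sum that is bounded up to `log r`. -/
theorem mem_range_of_eq_zero {F : ℂ → ℂ} (hF : Differentiable ℂ F) (h0 : F 0 ≠ 0)
    {C : ℝ} (hC : 0 < C) (hgrowth : HasSineGrowth F C) {μ : ℕ → ℝ} (hμ : StrictMono μ)
    (hpos : ∀ k, 0 < μ k) (hzero : ∀ k, F (μ k) = 0)
    (hle : ∀ᶠ k : ℕ in Filter.atTop, μ k ≤ ((k : ℝ) + 3 / 2) ^ 2) {z : ℂ} (hz : F z = 0) :
    z ∈ Set.range fun k => (μ k : ℂ) := by
  by_contra hzμ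
  obtain ⟨E, hE⟩ := exists_sum_range_le_sum_range_add (a := fun k => Real.log (μ k))
    (b := fun k : ℕ => 2 * Real.log ((k : ℝ) + 3 / 2)) <| hle.mono fun k hk => by
      simpa using Real.log_le_log (hpos k) hk
  have hr_top : Filter.Tendsto (fun n : ℕ => (n : ℝ) + 3 / 2) Filter.atTop Filter.atTop :=
    Filter.tendsto_atTop_add_const_right _ _ tendsto_natCast_atTop_atTop
  have hbound : ∀ᶠ n : ℕ in Filter.atTop, Real.log ((n : ℝ) + 3 / 2) ≤
      Real.log C - Real.log ‖F 0‖ + Real.log ‖z‖ + 1 + 2 * Real.log 2 + E := by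
    filter_upwards [hle, ((Filter.tendsto_pow_atTop two_ne_zero).comp
      hr_top).eventually_ge_atTop ‖z‖] with n hn hzn
    have hcount := log_le_of_hasSineGrowth hF h0 hC hgrowth
      (by linarith [n.cast_nonneg (α := ℝ)]) hμ hpos hzero (n := n + 1)
      (fun k hk => (hμ.monotone (Nat.lt_succ_iff.1 hk)).trans hn) hz hzn hzμ
    have hsum := sum_log_half_le (n + 1)
    have hsumE := hE (n + 1)
    have hshift : (n : ℝ) + 1 + 1 / 2 = n + 3 / 2 := by ring
    push_cast [← Finset.mul_sum, hshift] at hcount hsum hsumE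
    linarith
  obtain ⟨n, hn, hn'⟩ := (hbound.and ((Real.tendsto_log_atTop.comp hr_top).eventually_gt_atTop
    _)).exists
  exact hn'.not_ge hn

/-! ### The Dirichlet problem for the model operator -/

theorem modelEquation_iff {b : ℝ} (hb : b ≠ 0) (z x u u'' : ℂ) :
    -((b ^ 3 : ℝ) : ℂ)⁻¹ * u'' + I * x * u = z * u ↔
      u'' = (-(b * I)) ^ 2 * (b * z + x * -(b * I)) * u := by
  have hb' : (b : ℂ) ≠ 0 := ofReal_ne_zero.2 hb
  rw [ofReal_pow]
  constructor
  · intro h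
    field_simp at h
    linear_combination -h - b ^ 3 * (z - x * I) * u * I_sq
  · rintro rfl
    field_simp
    linear_combination -(z - x * I) * u * I_sq

namespace AiryBasis

variable {f f' g g' : ℂ → ℂ} {b : ℝ} {z : ℂ}

theorem differentiable_verticalDet (h : AiryBasis f f' g g') (b : ℝ) :
    Differentiable ℂ (verticalDet f g b) := by
  have hf := h.left.differentiable
  have hg := h.right.differentiable
  unfold verticalDet
  fun_prop

theorem verticalDet_eq_zero_of_isModelEigenvalue (h : AiryBasis f f' g g') (hb : b ≠ 0)
    (hz : IsModelEigenvalue (b ^ 3) z) : verticalDet f g b (b * z) = 0 := by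
  obtain ⟨y, hy, ⟨x, hx, hyx⟩, hode, hy₀, hy₁⟩ := hz
  have hd : -((b : ℂ) * I) ≠ 0 := neg_ne_zero.2 (mul_ne_zero (ofReal_ne_zero.2 hb) I_ne_zero)
  have hf := h.left.restrict_line (b * z) (-(b * I))
  have hg := h.right.restrict_line (b * z) (-(b * I))
  have hcont : Continuous fun t : ℝ => (-(b * I)) ^ 2 * (b * z + t * -(b * I)) * y t := by
    have := hy.continuous
    fun_prop
  have hodeIcc : Set.EqOn (deriv (deriv y))
      (fun t : ℝ => (-(b * I)) ^ 2 * (b * z + t * -(b * I)) * y t) (Set.Icc (-1) 1) := by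
    rw [← closure_Ioo (by norm_num : (-1 : ℝ) ≠ 1)]
    exact Set.EqOn.closure (fun t ht => (modelEquation_iff hb z t _ _).1 (hode t ht))
      (hy.iterate_deriv' 0 2).continuous hcont
  obtain ⟨α, β, hyαβ⟩ := hf.exists_eqOn_linear_combination hg
    (by rwa [h.wronskian_line]) hy hodeIcc
  refine h.verticalDet_eq_zero_iff.2
    ⟨α, β, fun ⟨hα, hβ⟩ => hyx (by simp [hyαβ hx, hα, hβ]), ?_, ?_⟩
  · simpa [hy₀] using (hyαβ (Set.left_mem_Icc.2 (by norm_num))).symm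
  · simpa [hy₁, sub_eq_add_neg] using (hyαβ (Set.right_mem_Icc.2 (by norm_num))).symm

theorem isModelEigenvalue_of_verticalDet_eq_zero (h : AiryBasis f f' g g') (hb : b ≠ 0)
    (hz : verticalDet f g b (b * z) = 0) : IsModelEigenvalue (b ^ 3) z := by
  obtain ⟨α, β, hne, hup, hdown⟩ := h.verticalDet_eq_zero_iff.1 hz
  have hd : -((b : ℂ) * I) ≠ 0 := neg_ne_zero.2 (mul_ne_zero (ofReal_ne_zero.2 hb) I_ne_zero)
  have hy := (h.left.linear_combination h.right α β).restrict_line (b * z) (-(b * I))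
  refine ⟨_, hy.contDiff (by fun_prop), ?_,
    fun x _ => (modelEquation_iff hb z x _ _).2 (hy.deriv_deriv x), ?_, ?_⟩
  · by_contra! hzero
    exact hne (h.eq_zero_of_eqOn_segment hd (by norm_num : (-1 : ℝ) < 1)
      fun t ht => hzero t (Set.Ioo_subset_Icc_self ht))
  · simpa using hup
  · simpa [sub_eq_add_neg] using hdown

theorem norm_mul_norm_verticalDet_le (h : AiryBasis f f' g g') (hb : 0 < b) {κ : ℂ} (hκ : κ ≠ 0) :
    ‖κ‖ * ‖verticalDet f g b ((κ / b) ^ 2)‖ ≤ b * Real.exp (2 * |κ.im| + b ^ 3 / ‖κ‖) := by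
  have hb' : (b : ℂ) ≠ 0 := ofReal_ne_zero.2 hb.ne'
  set a : ℂ := (κ / b) ^ 2
  have hQ : (fun t : ℝ => (-(b * I)) ^ 2 * (a + t * -(b * I))) =
      fun t : ℝ => -(κ ^ 2 + -(b ^ 3 * t * I)) := funext fun t => by
    have ha : b ^ 2 * a = κ ^ 2 := by simp only [a]; field_simp
    linear_combination (-1 : ℂ) * ha + (b ^ 2 * a - b ^ 3 * t * I) * I_sq
  have hw := (h.left.linear_combination h.right (g (a + b * I)) (-f (a + b * I))).restrict_line a
    (-(b * I))
  rw [hQ] at hw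
  have henergy := hw.energy_le (ρ := b ^ 3) hκ (by norm_num : (-1 : ℝ) ≤ 1) fun t ht => by
    simpa [abs_of_pos hb] using mul_le_of_le_one_right (by positivity : 0 ≤ b ^ 3) (abs_le.2 ht)
  have hleft : a + (-1 : ℝ) * -(b * I) = a + b * I := by push_cast; ring
  have hright : a + (1 : ℝ) * -(b * I) = a - b * I := by push_cast; ring
  have hderiv : -(b * I) * (g (a + b * I) * f' (a + b * I) + -f (a + b * I) * g' (a + b * I)) =
      b * I := by linear_combination (b * I) * h.wronskian (a + b * I)
  have hvalue : g (a + b * I) * f (a - b * I) + -f (a + b * I) * g (a - b * I) =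
      -verticalDet f g b a := by rw [verticalDet]; ring
  have hcancel : g (a + b * I) * f (a + b * I) + -f (a + b * I) * g (a + b * I) = 0 := by ring
  have hnorm : ‖(b : ℂ) * I‖ = b := by rw [norm_mul, norm_I, mul_one, Complex.norm_of_nonneg hb.le]
  rw [hleft, hright, hderiv, hvalue, hcancel, norm_neg, norm_zero, hnorm] at henergy
  refine (pow_le_pow_iff_left₀ (by positivity) (by positivity) two_ne_zero).1 ?_
  calc (‖κ‖ * ‖verticalDet f g b a‖) ^ 2 = ‖κ‖ ^ 2 * ‖verticalDet f g b a‖ ^ 2 := mul_pow _ _ _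
    _ ≤ _ := (le_add_of_nonneg_left (by positivity)).trans henergy
    _ = (b * Real.exp (2 * |κ.im| + b ^ 3 / ‖κ‖)) ^ 2 := by
        rw [mul_pow b, ← Real.exp_nat_mul]
        push_cast
        ring_nf

theorem hasSineGrowth_verticalDet (h : AiryBasis f f' g g') (hb : 0 < b) :
    HasSineGrowth (fun ζ => verticalDet f g b ((π / (2 * b)) ^ 2 * ζ))
      (b / (π / 2) * Real.exp (b ^ 3 / (π / 2))) := by
  intro r θ hr hθ
  have : 0 < r := one_pos.trans_le hr
  set κ : ℂ := (π / 2 * r : ℝ) * exp ((θ / 2 : ℝ) * I) with hκ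
  have hκnorm : ‖κ‖ = π / 2 * r := by
    rw [hκ, norm_mul, norm_exp_ofReal_mul_I, mul_one, Complex.norm_of_nonneg (by positivity)]
  have hκ₀ : 0 < ‖κ‖ := hκnorm ▸ by positivity
  have hκim : 2 * |κ.im| = π * r * Real.sin (θ / 2) := by
    have hsin : 0 ≤ Real.sin (θ / 2) :=
      Real.sin_nonneg_of_nonneg_of_le_pi (by linarith [hθ.1]) (by linarith [hθ.2])
    rw [hκ, im_ofReal_mul, exp_ofReal_mul_I_im, abs_of_nonneg (by positivity)]
    ring
  have hsq : (π / (2 * b)) ^ 2 * circleMap 0 (r ^ 2) θ = (κ / b) ^ 2 := by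
    have hexp : exp ((θ / 2 : ℝ) * I) ^ 2 = exp (θ * I) := by
      rw [← Complex.exp_nat_mul]
      push_cast
      ring_nf
    rw [circleMap_zero, div_pow κ, hκ, mul_pow, hexp]
    push_cast
    ring
  beta_reduce
  rw [hsq]
  calc ‖verticalDet f g b ((κ / b) ^ 2)‖
      ≤ b * Real.exp (2 * |κ.im| + b ^ 3 / ‖κ‖) / ‖κ‖ :=
        (le_div_iff₀' hκ₀).2 (h.norm_mul_norm_verticalDet_le hb (norm_pos_iff.1 hκ₀))
    _ = b * Real.exp (b ^ 3 / (π / 2 * r)) / (π / 2 * r) * Real.exp (π * r * Real.sin (θ / 2)) := by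
        rw [hκim, hκnorm, Real.exp_add]
        ring
    _ ≤ b * Real.exp (b ^ 3 / (π / 2)) / (π / 2 * r) * Real.exp (π * r * Real.sin (θ / 2)) := by
        gcongr
        exact le_mul_of_one_le_right (by positivity) hr
    _ = _ := by ring

theorem mem_range_of_verticalDet_eq_zero (h : AiryBasis f f' g g') (hb : 0 < b) {s : ℕ → ℝ}
    (hs : StrictMono s) (hpos : ∀ k, 0 < s k) (hdet : ∀ k, verticalDet f g b (s k) = 0)
    (hasymp : ∀ᶠ k : ℕ in Filter.atTop, |(k + 1) * π - 2 * √(s k) * b| < π / 2)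
    (hz : verticalDet f g b z = 0) : z ∈ Set.range fun k => (s k : ℂ) := by
  have hb' : (b : ℂ) ≠ 0 := ofReal_ne_zero.2 hb.ne'
  have hπ : (π : ℂ) ≠ 0 := ofReal_ne_zero.2 Real.pi_ne_zero
  have hscale : ∀ w : ℂ, (π / (2 * b)) ^ 2 * ((2 * b / π) ^ 2 * w) = w := fun w => by field_simp
  have hle : ∀ᶠ k : ℕ in Filter.atTop, (2 * b / π) ^ 2 * s k ≤ ((k : ℝ) + 3 / 2) ^ 2 :=
    hasymp.mono fun k hk => by
      rw [← Real.sq_sqrt (hpos k).le, ← mul_pow, div_mul_eq_mul_div]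
      gcongr
      rw [div_le_iff₀ Real.pi_pos]
      linarith [(abs_lt.1 hk).1]
  obtain ⟨k, hk⟩ := mem_range_of_eq_zero
    (F := fun ζ => verticalDet f g b ((π / (2 * b)) ^ 2 * ζ)) (z := (2 * b / π) ^ 2 * z)
    ((h.differentiable_verticalDet b).comp (differentiable_id.const_mul _))
    (by simpa using h.verticalDet_ne_zero (a := 0) hb (by positivity)) (by positivity)
    (h.hasSineGrowth_verticalDet hb) (hs.const_mul (by positivity))
    (fun k => mul_pos (by positivity) (hpos k))
    (fun k => by push_cast; rw [hscale]; exact hdet k) hle (by rwa [hscale])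
  refine ⟨k, ?_⟩
  beta_reduce at hk ⊢
  rw [← hscale z, ← hk]
  push_cast
  exact (hscale _).symm

theorem setOf_isModelEigenvalue_eq_range (h : AiryBasis f f' g g') (hb : 0 < b) {s : ℕ → ℝ}
    (hs : StrictMono s) (hpos : ∀ k, 0 < s k) (hdet : ∀ k, verticalDet f g b (s k) = 0)
    (hasymp : ∀ᶠ k : ℕ in Filter.atTop, |(k + 1) * π - 2 * √(s k) * b| < π / 2) :
    {z | IsModelEigenvalue (b ^ 3) z} = Set.range fun k => ((s k / b : ℝ) : ℂ) := by
  have hb' : (b : ℂ) ≠ 0 := ofReal_ne_zero.2 hb.ne'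
  refine Set.Subset.antisymm (fun z hz => ?_) ?_
  · obtain ⟨k, hk⟩ := h.mem_range_of_verticalDet_eq_zero hb hs hpos hdet hasymp
      (h.verticalDet_eq_zero_of_isModelEigenvalue hb.ne' hz)
    exact ⟨k, (ofReal_div _ _).trans ((div_eq_iff hb').2 (hk.trans (mul_comm _ _)))⟩
  · rintro _ ⟨k, rfl⟩
    refine h.isModelEigenvalue_of_verticalDet_eq_zero hb.ne' ?_
    beta_reduce
    rw [ofReal_div, mul_div_cancel₀ _ hb']
    exact hdet k

end AiryBasis

theorem tendsto_sq_div_sq_of_abs_sub_lt {u : ℕ → ℝ}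
    (h : ∀ᶠ k : ℕ in Filter.atTop, |(k + 1) * π - 2 * u k| < π / 2) :
    Filter.Tendsto (fun k : ℕ => u k ^ 2 / (π * (k + 1) / 2) ^ 2) Filter.atTop (nhds 1) := by
  have hdiff : Filter.Tendsto (fun k : ℕ => u k / (π * (k + 1) / 2) - 1) Filter.atTop (nhds 0) := by
    refine squeeze_zero_norm' (h.mono fun k hk => ?_) tendsto_one_div_add_atTop_nhds_zero_nat
    have hquot : u k / (π * (k + 1) / 2) - 1 = -((k + 1) * π - 2 * u k) / (π * (k + 1)) := by
      field_simp
      ring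
    rw [hquot, norm_div, norm_neg, Real.norm_eq_abs, Real.norm_of_nonneg (by positivity),
      div_le_div_iff₀ (by positivity) (by positivity)]
    nlinarith [Real.pi_pos]
  simpa [div_pow] using (hdiff.add_const 1).pow 2

/-! ### The standard Airy functions -/

theorem IsAiry.airySolution {w : ℂ → ℂ} {w₀ w₀' : ℝ} (hw : IsAiry w w₀ w₀') :
    AirySolution w (deriv w) where
  hasDerivAt z := (hw.1 z).hasDerivAt
  hasDerivAt_deriv z := hw.2.2.1 z ▸ (hw.2.1 z).hasDerivAt

theorem rayZeroModuli_const_mul {c : ℂ} (hc : c ≠ 0) (U : ℂ → ℂ) :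
    rayZeroModuli (fun z => c * U z) = rayZeroModuli U := by
  simp only [rayZeroModuli, mul_eq_zero, hc, false_or]

theorem sqrt_three_mul_rpow (x : ℝ) : √3 * (3 : ℝ) ^ x = 3 ^ (1 / 2 + x) := by
  rw [Real.sqrt_eq_rpow, ← Real.rpow_add three_pos]

theorem IsAiryAi.sqrt_three_mul_apply_zero {Ai Bi : ℂ → ℂ} (hAi : IsAiryAi Ai)
    (hBi : IsAiryBi Bi) : √3 * Ai 0 = Bi 0 ∧ √3 * deriv Ai 0 = -deriv Bi 0 := by
  rw [hAi.2.2.2.1, hAi.2.2.2.2, hBi.2.2.2.1, hBi.2.2.2.2]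
  have hexp : (1 / 2 + -2 / 3 : ℝ) = -1 / 6 ∧ (1 / 2 + -1 / 3 : ℝ) = 1 / 6 := by norm_num
  constructor
  · rw [← ofReal_mul, ← mul_div_assoc, sqrt_three_mul_rpow, hexp.1]
  · rw [← ofReal_mul, ← ofReal_neg, ← mul_div_assoc, mul_neg, sqrt_three_mul_rpow, hexp.2, neg_div]

theorem IsAiryBi.apply_zero_ne_zero {Bi : ℂ → ℂ} (hBi : IsAiryBi Bi) :
    Bi 0 ≠ 0 ∧ deriv Bi 0 ≠ 0 := by
  rw [hBi.2.2.2.1, hBi.2.2.2.2]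
  have hΓ : ∀ x : ℝ, 0 < x → Real.Gamma x ≠ 0 := fun x hx => (Real.Gamma_pos_of_pos hx).ne'
  constructor <;> exact ofReal_ne_zero.2 (div_ne_zero (by positivity) (hΓ _ (by norm_num)))

theorem exists_airyBasis {Ai Bi : ℂ → ℂ} (hAi : IsAiryAi Ai) (hBi : IsAiryBi Bi) :
    ∃ f f' g g' : ℂ → ℂ, AiryBasis f f' g g' ∧
      rayZeroModuli g = rayZeroModuli (Uminus Ai Bi) := by
  obtain ⟨h₀, h₀'⟩ := hAi.sqrt_three_mul_apply_zero hBi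
  obtain ⟨hB₀, hB₀'⟩ := hBi.apply_zero_ne_zero
  have hplus := hAi.airySolution.linear_combination hBi.airySolution √3 1
  have hminus := hAi.airySolution.linear_combination hBi.airySolution (-√3) 1
  have hminus₀' : -√3 * deriv Ai 0 + 1 * deriv Bi 0 = 2 * deriv Bi 0 := by linear_combination -h₀'
  have hne : -√3 * deriv Ai 0 + 1 * deriv Bi 0 ≠ 0 := hminus₀' ▸ mul_ne_zero two_ne_zero hB₀'
  refine ⟨_, _, _, _, hplus.airyBasis hminus ?_ (by linear_combination h₀')
    (by linear_combination -h₀) hne, (rayZeroModuli_const_mul (inv_ne_zero hne) _).trans ?_⟩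
  · rw [h₀, one_mul, ← two_mul]
    exact mul_ne_zero two_ne_zero hB₀
  · simp only [one_mul]
    rfl

/-- For `0 < ε < ε₁ = (√3·α₁/2)³` (where `α₁` is the smallest modulus of a zero of `U₋`
on the ray `arg z = π/3`), the eigenvalues of `T(ε)` form a strictly increasing sequence
`(λ_k)` of positive reals tending to `+∞`, with `λ_k · ε / (πk/2)² → 1` as `k → ∞`
(the sequence is indexed from `0`, so `lam k` is the paper's `λ_{k+1}`). -/
theorem real_spectrum_structure_before_first_collision (Ai Bi : ℂ → ℂ)
    (hAi : IsAiryAi Ai) (hBi : IsAiryBi Bi)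
    (α₁ : ℝ) (hα₁ : IsLeast (rayZeroModuli (Uminus Ai Bi)) α₁)
    (ε : ℝ) (hε : 0 < ε) (hε' : ε < (Real.sqrt 3 * α₁ / 2) ^ 3) :
    ∃ lam : ℕ → ℝ, StrictMono lam ∧ (∀ k : ℕ, 0 < lam k) ∧
      Filter.Tendsto lam Filter.atTop Filter.atTop ∧
      {z : ℂ | IsModelEigenvalue ε z} = Set.range (fun k : ℕ => ((lam k : ℝ) : ℂ)) ∧
      Filter.Tendsto (fun k : ℕ => lam k * ε / (π * (k + 1) / 2) ^ 2)
        Filter.atTop (nhds 1) := by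
  obtain ⟨f, f', g, g', hbasis, hray⟩ := exists_airyBasis hAi hBi
  obtain ⟨b, hb, rfl⟩ : ∃ b : ℝ, 0 < b ∧ b ^ 3 = ε :=
    ⟨ε ^ ((3 : ℕ) : ℝ)⁻¹, by positivity, Real.rpow_inv_natCast_pow hε.le three_ne_zero⟩
  have hα₁pos : 0 < α₁ := hα₁.1.1
  have hbB : b < √3 / 2 * α₁ :=
    lt_of_pow_lt_pow_left₀ 3 (by positivity) (by rwa [div_mul_eq_mul_div])
  obtain ⟨s, hs, hpos, hs_top, hdet, hasymp⟩ := hbasis.exists_seq_verticalDet_eq_zero hb hbB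
    fun r hr => by gcongr; exact hα₁.2 (hray ▸ hr)
  have hsq : ∀ k, s k / b * b ^ 3 = (√(s k) * b) ^ 2 := fun k => by
    rw [mul_pow, Real.sq_sqrt (hpos k).le]
    field_simp
  refine ⟨fun k => s k / b, fun k l hkl => div_lt_div_of_pos_right (hs hkl) hb,
    fun k => div_pos (hpos k) hb, hs_top.atTop_div_const hb,
    hbasis.setOf_isModelEigenvalue_eq_range hb hs hpos hdet hasymp, ?_⟩
  simp only [hsq]
  exact tendsto_sq_div_sq_of_abs_sub_lt (by simpa only [mul_assoc] using hasymp)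
end
end

section
/- For every ε > 0 and every real λ, λ is an eigenvalue of the model operator T(ε) if and only if there exists a real number a such that a·Ai(ε^{1/3}(λ − i)) + Bi(ε^{1/3}(λ − i)) = 0, where ε^{1/3} is the real cube root. In other words, each point (ε, λ) of the real spectral locus of the model family corresponds to a pair of complex conjugate zeros ε^{1/3}(λ ∓ i) of a real solution V_a = a·Ai + Bi of the Airy equation, and conversely every non-real zero ξ₀ of V_a with a ∈ ℝ gives the real spectral locus point ε = |Im ξ₀|³, λ = Re ξ₀/|Im ξ₀|. -/
open Complex MeasureTheory Real

noncomputable section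

/-!
In the variable `z = k (λ - i x)` with `k³ = ε`, the eigenvalue equation becomes the Airy equation,
and the boundary points `x = ±1` become `ξ = k (λ - i)` and `k (λ + i)`. Hence `λ` is an eigenvalue
iff the Airy solution `Bi ξ • Ai - Ai ξ • Bi`, which vanishes at `ξ`, vanishes also at `k (λ + i)`.
For real `λ` and `k` the second point is `conj ξ`, and the condition becomes
`Ai ξ * conj (Bi ξ) = Bi ξ * conj (Ai ξ)`, that is, `Bi ξ / Ai ξ` is real, provided that `Ai ξ ≠ 0`.

The zeros of `Ai` are real: along the half-line `t ↦ ξ + t` with `Im ξ > 0`, the function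
`Im (Ai' * conj Ai)` is nondecreasing with derivative `Im ξ * |Ai|²`. If `Ai ξ = 0`, then it
vanishes at `t = 0` and tends to `0` at infinity, so it is constant and `Ai` vanishes identically.
The decay of `Ai` and `Ai'` is read off from the contour integral
`2πi Ai(z) = ∫ exp (s³/3 - z s) ds`.
-/

open Filter Set Topology ComplexConjugate

theorem eqOn_Ici_const_of_monotoneOn_of_tendsto {α β : Type*} [Preorder α] [IsDirectedOrder α]
    [PartialOrder β] [TopologicalSpace β] [OrderClosedTopology β] {f : α → β} {a : α}
    (hf : MonotoneOn f (Ici a)) (hlim : Tendsto f atTop (𝓝 (f a))) :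
    EqOn f (fun _ ↦ f a) (Ici a) := fun t ht ↦ by
  have : Nonempty α := ⟨a⟩
  refine le_antisymm (ge_of_tendsto hlim <| (eventually_ge_atTop t).mono fun r hr ↦ ?_)
    (hf self_mem_Ici ht ht)
  exact hf ht (le_trans (mem_Ici.1 ht) hr) hr

section LinearODE

variable {𝕜 A : Type*} [RCLike 𝕜] [NormedCommRing A] [NormedAlgebra 𝕜 A]

/-- `u` is a solution on `s` of the second-order linear equation `u'' = q · u`, with derivative
`u'`. The derivative is part of the data, so that linear combinations and pullbacks of solutions
come with an explicit formula for it. -/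
structure IsSolutionOn (q u u' : 𝕜 → A) (s : Set 𝕜) : Prop where
  hasDerivAt : ∀ x ∈ s, HasDerivAt u (u' x) x
  hasDerivAt_deriv : ∀ x ∈ s, HasDerivAt u' (q x * u x) x

namespace IsSolutionOn

variable {q r u u' v v' : 𝕜 → A} {s t : Set 𝕜}

theorem mono (hu : IsSolutionOn q u u' s) (hts : t ⊆ s) : IsSolutionOn q u u' t :=
  ⟨fun x hx ↦ hu.hasDerivAt x (hts hx), fun x hx ↦ hu.hasDerivAt_deriv x (hts hx)⟩

theorem congr_coeff (hu : IsSolutionOn q u u' s) (hqr : EqOn q r s) : IsSolutionOn r u u' s :=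
  ⟨hu.hasDerivAt, fun x hx ↦ hqr hx ▸ hu.hasDerivAt_deriv x hx⟩

theorem const_mul_sub_const_mul (hu : IsSolutionOn q u u' s) (hv : IsSolutionOn q v v' s)
    (a b : A) :
    IsSolutionOn q (fun x ↦ a * u x - b * v x) (fun x ↦ a * u' x - b * v' x) s where
  hasDerivAt x hx := ((hu.hasDerivAt x hx).const_mul a).sub ((hv.hasDerivAt x hx).const_mul b)
  hasDerivAt_deriv x hx := (((hu.hasDerivAt_deriv x hx).const_mul a).sub
    ((hv.hasDerivAt_deriv x hx).const_mul b)).congr_deriv (by ring)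

theorem wronskian_eq (hu : IsSolutionOn q u u' s) (hv : IsSolutionOn q v v' s)
    (hs : Convex ℝ s) {x y : 𝕜} (hx : x ∈ s) (hy : y ∈ s) :
    u x * v' x - u' x * v x = u y * v' y - u' y * v y := by
  have hderiv : ∀ z ∈ s, HasDerivAt (fun z ↦ u z * v' z - u' z * v z) 0 z := fun z hz ↦
    (((hu.hasDerivAt z hz).mul (hv.hasDerivAt_deriv z hz)).sub
      ((hu.hasDerivAt_deriv z hz).mul (hv.hasDerivAt z hz))).congr_deriv (by ring)
  have h := hs.norm_image_sub_le_of_norm_hasDerivWithin_le (C := 0)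
    (fun z hz ↦ (hderiv z hz).hasDerivWithinAt) (fun _ _ ↦ by simp) hy hx
  rwa [zero_mul, norm_le_zero_iff, sub_eq_zero] at h

theorem eqOn_deriv_zero (hu : IsSolutionOn q u u' s) (hs : UniqueDiffOn 𝕜 s) (h : EqOn u 0 s) :
    EqOn u' 0 s := fun x hx ↦
  (hs x hx).eq_deriv _ (hu.hasDerivAt x hx).hasDerivWithinAt
    ((hasDerivWithinAt_const x s (0 : A)).congr h (h hx))

section RealParameter

variable [NormedAlgebra ℝ A]

theorem comp_of_hasDerivAt_const [IsScalarTower ℝ 𝕜 A] (hu : IsSolutionOn q u u' s)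
    {γ : ℝ → 𝕜} {b : 𝕜} (hγ : ∀ t, HasDerivAt γ b t) :
    IsSolutionOn (fun t ↦ b ^ 2 • q (γ t)) (fun t ↦ u (γ t)) (fun t ↦ b • u' (γ t)) (γ ⁻¹' s) where
  hasDerivAt t ht := (hu.hasDerivAt _ ht).scomp t (hγ t)
  hasDerivAt_deriv t ht := (((hu.hasDerivAt_deriv _ ht).scomp t (hγ t)).const_smul b).congr_deriv
    (by rw [smul_smul, ← sq, smul_mul_assoc])

theorem eqOn_zero_of_Icc {q u u' : ℝ → A} {a b : ℝ} (hu : IsSolutionOn q u u' (Icc a b))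
    (hq : ContinuousOn q (Icc a b)) (h0 : u a = 0) (h0' : u' a = 0) :
    EqOn u 0 (Icc a b) := by
  obtain ⟨C, hC⟩ := isCompact_Icc.exists_bound_of_continuousOn hq
  have hderiv : ∀ x ∈ Icc a b, HasDerivAt (fun x ↦ (u x, u' x)) (u' x, q x * u x) x :=
    fun x hx ↦ (hu.hasDerivAt x hx).prodMk (hu.hasDerivAt_deriv x hx)
  have hbound : ∀ x ∈ Ico a b, ‖(u' x, q x * u x)‖ ≤ max 1 C * ‖(u x, u' x)‖ := fun x hx ↦ by
    have hqx : ‖q x‖ ≤ max 1 C := (hC x (Ico_subset_Icc_self hx)).trans (le_max_right _ _)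
    refine max_le ?_ ((norm_mul_le _ _).trans ?_)
    · exact (norm_snd_le (u x, u' x)).trans
        (le_mul_of_one_le_left (norm_nonneg _) (le_max_left _ _))
    · gcongr
      exact norm_fst_le (u x, u' x)
  have hzero := eq_zero_of_abs_deriv_le_mul_abs_self_of_eq_zero_right
    (fun x hx ↦ (hderiv x hx).continuousAt.continuousWithinAt)
    (fun x hx ↦ (hderiv x (Ico_subset_Icc_self hx)).hasDerivWithinAt)
    (by rw [h0, h0', Prod.mk_zero_zero]) hbound
  exact fun x hx ↦ congrArg Prod.fst (hzero x hx)

theorem eqOn_zero [IsScalarTower ℝ 𝕜 A] (hu : IsSolutionOn q u u' s) (hs : Convex ℝ s)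
    (hq : ContinuousOn q s) {x₀ : 𝕜} (hx₀ : x₀ ∈ s) (h0 : u x₀ = 0) (h0' : u' x₀ = 0) :
    EqOn u 0 s := fun x hx ↦ by
  have hmaps : MapsTo (AffineMap.lineMap x₀ x : ℝ → 𝕜) (Icc 0 1) s := fun t ht ↦
    hs.lineMap_mem hx₀ hx ht
  have hsegment := (hu.comp_of_hasDerivAt_const
    fun _ ↦ AffineMap.hasDerivAt_lineMap (a := x₀) (b := x)).mono hmaps
  have hcont : ContinuousOn (fun t : ℝ ↦ (x - x₀) ^ 2 • q (AffineMap.lineMap x₀ x t)) (Icc 0 1) :=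
    (hq.comp AffineMap.lineMap_continuous.continuousOn hmaps).const_smul _
  simpa using hsegment.eqOn_zero_of_Icc hcont (by simp [h0]) (by simp [h0'])
    (right_mem_Icc.2 zero_le_one)

end RealParameter

/-! ### Decaying solutions -/

section HalfLine

variable {q u u' : ℝ → ℂ} {s : Set ℝ} {a t : ℝ}

theorem hasDerivAt_im_mul_conj (hu : IsSolutionOn q u u' s) (ht : t ∈ s) :
    HasDerivAt (fun t ↦ (u' t * conj (u t)).im) ((q t).im * normSq (u t)) t := by
  have hprod := (hu.hasDerivAt_deriv t ht).mul (hu.hasDerivAt t ht).star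
  refine (imCLM.hasFDerivAt.comp_hasDerivAt t hprod).congr_deriv ?_
  simp only [imCLM_apply, star_def, add_im, mul_assoc, mul_conj, im_mul_ofReal, ofReal_im,
    add_zero]

theorem eqOn_zero_of_tendsto_zero (hu : IsSolutionOn q u u' (Ici a))
    (hq : ∀ t ∈ Ioi a, 0 < (q t).im) (h0 : u a = 0)
    (hlim : Tendsto u atTop (𝓝 0)) (hlim' : Tendsto u' atTop (𝓝 0)) :
    EqOn u 0 (Ici a) := by
  set p : ℝ → ℝ := fun t ↦ (u' t * conj (u t)).im with hp
  have hderiv : ∀ t ∈ Ici a, HasDerivAt p ((q t).im * normSq (u t)) t :=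
    fun t ht ↦ hu.hasDerivAt_im_mul_conj ht
  have hmono : MonotoneOn p (Ici a) := by
    refine monotoneOn_of_hasDerivWithinAt_nonneg (convex_Ici a)
      (fun t ht ↦ (hderiv t ht).continuousAt.continuousWithinAt)
      (fun t ht ↦ (hderiv t (interior_subset ht)).hasDerivWithinAt) fun t ht ↦ ?_
    rw [interior_Ici] at ht
    exact mul_nonneg (hq t ht).le (normSq_nonneg _)
  have hplim : Tendsto p atTop (𝓝 0) := by
    have hprod := hlim'.mul (continuous_conj.continuousAt.tendsto.comp hlim)
    simpa [hp, Function.comp_def] using (continuous_im.tendsto _).comp hprod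
  have hpa : p a = 0 := by simp [hp, h0]
  have hpzero : EqOn p (fun _ ↦ 0) (Ici a) :=
    hpa ▸ eqOn_Ici_const_of_monotoneOn_of_tendsto hmono (hpa ▸ hplim)
  intro t ht
  rcases eq_or_lt_of_le (mem_Ici.1 ht) with rfl | hat
  · exact h0
  · have hp_const : p =ᶠ[𝓝 t] fun _ ↦ 0 := by
      filter_upwards [Ioi_mem_nhds hat] with r hr using hpzero (mem_Ici.2 (le_of_lt hr))
    have hpt := (hderiv t ht).unique ((hasDerivAt_const t 0).congr_of_eventuallyEq hp_const)
    exact normSq_eq_zero.1 ((mul_eq_zero.1 hpt).resolve_left (hq t hat).ne')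

end HalfLine

end IsSolutionOn

end LinearODE

/-! ### Moments of the exponential of a cubic -/

section CubicLaplace

variable {n : ℕ}

/-- The moments `∫₀^∞ sⁿ exp(-s³/3 - z s) ds` of the Laplace transform of `exp(-s³/3)`. For `n = 0`
this is `π Hi(-z)`, where `Hi` is the Scorer function. -/
def cubicLaplace (n : ℕ) (z : ℂ) : ℂ :=
  ∫ s : ℝ in Ioi 0, (s : ℂ) ^ n * Complex.exp (-(s : ℂ) ^ 3 / 3 - z * s)

theorem norm_pow_mul_exp_cubic {s : ℝ} (hs : 0 < s) (z : ℂ) :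
    ‖(s : ℂ) ^ n * Complex.exp (-(s : ℂ) ^ 3 / 3 - z * s)‖ =
      s ^ n * Real.exp (-s ^ 3 / 3 - z.re * s) := by
  have hcubic : -(s : ℂ) ^ 3 / 3 = ((-s ^ 3 / 3 : ℝ) : ℂ) := by push_cast; rfl
  rw [norm_mul, norm_pow, Complex.norm_exp, norm_real, Real.norm_of_nonneg hs.le, hcubic, sub_re,
    ofReal_re, re_mul_ofReal]

theorem pow_mul_exp_cubic_le_of_le {s a b : ℝ} (hs : 0 < s) (hab : a ≤ b) :
    s ^ n * Real.exp (-s ^ 3 / 3 - b * s) ≤ s ^ n * Real.exp (-s ^ 3 / 3 - a * s) := by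
  gcongr

theorem continuous_pow_mul_exp_cubic (n : ℕ) (z : ℂ) :
    Continuous fun s : ℝ ↦ (s : ℂ) ^ n * Complex.exp (-(s : ℂ) ^ 3 / 3 - z * s) := by
  fun_prop

theorem integrableOn_pow_mul_rexp_cubic (n : ℕ) (a : ℝ) :
    IntegrableOn (fun s : ℝ ↦ s ^ n * Real.exp (-s ^ 3 / 3 - a * s)) (Ioi 0) := by
  have hGamma : IntegrableOn (fun s : ℝ ↦ Real.exp (-s) * s ^ n) (Ioi 0) := by
    simpa using Real.GammaIntegral_convergent (s := n + 1) (by positivity)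
  set c : ℝ := 1 + |a|
  have hc_one : 1 ≤ c := le_add_of_nonneg_right (abs_nonneg a)
  refine (hGamma.const_mul (Real.exp (2 / 3 * c ^ 3))).mono'
    (Continuous.aestronglyMeasurable (by fun_prop)) ?_
  filter_upwards [ae_restrict_mem measurableSet_Ioi] with s (hs : 0 < s)
  have hlinear : (1 - a) * s ≤ c ^ 2 * s := by
    gcongr
    nlinarith [neg_le_abs a]
  -- The graph of `s ↦ s³` lies above its tangent line at `c`.
  have htangent : c ^ 2 * s ≤ s ^ 3 / 3 + 2 / 3 * c ^ 3 := by
    have : 0 ≤ (s - c) ^ 2 * (s + 2 * c) := by positivity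
    linarith
  rw [Real.norm_of_nonneg (by positivity), mul_comm, ← mul_assoc, ← Real.exp_add]
  gcongr
  linarith

theorem integrableOn_pow_mul_exp_cubic (n : ℕ) (z : ℂ) :
    IntegrableOn (fun s : ℝ ↦ (s : ℂ) ^ n * Complex.exp (-(s : ℂ) ^ 3 / 3 - z * s)) (Ioi 0) := by
  refine (integrableOn_pow_mul_rexp_cubic n z.re).mono'
    (continuous_pow_mul_exp_cubic n z).aestronglyMeasurable ?_
  filter_upwards [ae_restrict_mem measurableSet_Ioi] with s hs
  exact (norm_pow_mul_exp_cubic hs z).le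

theorem hasDerivAt_cubicLaplace (n : ℕ) (z : ℂ) :
    HasDerivAt (cubicLaplace n) (-cubicLaplace (n + 1) z) z := by
  have hderiv (s : ℝ) (w : ℂ) :
      HasDerivAt (fun w : ℂ ↦ (s : ℂ) ^ n * Complex.exp (-(s : ℂ) ^ 3 / 3 - w * s))
        (-((s : ℂ) ^ (n + 1) * Complex.exp (-(s : ℂ) ^ 3 / 3 - w * s))) w :=
    ((((hasDerivAt_id w).mul_const (s : ℂ)).const_sub _).cexp.const_mul _).congr_deriv
      (by simp only [id]; ring)
  have hbound : ∀ᵐ s : ℝ ∂volume.restrict (Ioi 0), ∀ w ∈ Metric.ball z 1,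
      ‖-((s : ℂ) ^ (n + 1) * Complex.exp (-(s : ℂ) ^ 3 / 3 - w * s))‖ ≤
        s ^ (n + 1) * Real.exp (-s ^ 3 / 3 - (z.re - 1) * s) := by
    filter_upwards [ae_restrict_mem measurableSet_Ioi] with s hs w hw
    rw [norm_neg, norm_pow_mul_exp_cubic hs]
    refine pow_mul_exp_cubic_le_of_le hs ?_
    have hre := (abs_re_le_norm (w - z)).trans (mem_ball_iff_norm.1 hw).le
    rw [sub_re] at hre
    linarith [(abs_le.1 hre).1]
  have hmain := (hasDerivAt_integral_of_dominated_loc_of_deriv_le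
    (Metric.ball_mem_nhds z one_pos)
    (.of_forall fun w ↦ (continuous_pow_mul_exp_cubic n w).aestronglyMeasurable)
    (integrableOn_pow_mul_exp_cubic n z)
    (continuous_pow_mul_exp_cubic (n + 1) z).neg.aestronglyMeasurable hbound
    (integrableOn_pow_mul_rexp_cubic (n + 1) (z.re - 1))
    (.of_forall fun s w _ ↦ hderiv s w)).2
  rwa [integral_neg] at hmain

theorem hasDerivAt_cubicLaplace_const_mul (n : ℕ) (c z : ℂ) :
    HasDerivAt (fun z ↦ cubicLaplace n (c * z)) (-(c * cubicLaplace (n + 1) (c * z))) z :=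
  ((hasDerivAt_cubicLaplace n (c * z)).comp z ((hasDerivAt_id z).const_mul c)).congr_deriv
    (by ring)

theorem cubicLaplace_two_add_mul_cubicLaplace_zero (z : ℂ) :
    cubicLaplace 2 z + z * cubicLaplace 0 z = 1 := by
  set E : ℝ → ℂ := fun s ↦ Complex.exp (-(s : ℂ) ^ 3 / 3 - z * s) with hE
  have hderiv (s : ℝ) :
      HasDerivAt E (-((s : ℂ) ^ 2 * E s + z * ((s : ℂ) ^ 0 * E s))) s := by
    have hcubic : HasDerivAt (fun s : ℂ ↦ -s ^ 3 / 3 - z * s) (-(3 * (s : ℂ) ^ 2) / 3 - z * 1) s :=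
      ((hasDerivAt_pow 3 (s : ℂ)).neg.div_const 3).sub ((hasDerivAt_id (s : ℂ)).const_mul z)
    exact hcubic.cexp.comp_ofReal.congr_deriv (by simp only [hE]; ring)
  have hint2 := integrableOn_pow_mul_exp_cubic 2 z
  have hint0 := (integrableOn_pow_mul_exp_cubic 0 z).const_mul z
  have hlim : Tendsto E atTop (𝓝 0) :=
    tendsto_zero_of_hasDerivAt_of_integrableOn_Ioi (fun s _ ↦ hderiv s) (hint2.add hint0).neg
      (by simpa using integrableOn_pow_mul_exp_cubic 0 z)
  have hparts := integral_Ioi_of_hasDerivAt_of_tendsto' (fun s _ ↦ hderiv s)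
    (hint2.add hint0).neg hlim
  rw [integral_neg, integral_add hint2 hint0, integral_const_mul] at hparts
  have hE_zero : E 0 = 1 := by simp [hE]
  change -(cubicLaplace 2 z + z * cubicLaplace 0 z) = 0 - E 0 at hparts
  linear_combination hE_zero - hparts

theorem tendsto_cubicLaplace_zero {ι : Type*} {l : Filter ι} [l.IsCountablyGenerated] {f : ι → ℂ}
    (hf : Tendsto (fun i ↦ (f i).re) l atTop) :
    Tendsto (fun i ↦ cubicLaplace n (f i)) l (𝓝 0) := by
  have hbound : ∀ᶠ i in l, ∀ᵐ s : ℝ ∂volume.restrict (Ioi 0),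
      ‖(s : ℂ) ^ n * Complex.exp (-(s : ℂ) ^ 3 / 3 - f i * s)‖ ≤
        s ^ n * Real.exp (-s ^ 3 / 3 - 0 * s) := by
    filter_upwards [hf.eventually_ge_atTop 0] with i hi
    filter_upwards [ae_restrict_mem measurableSet_Ioi] with s hs
    rw [norm_pow_mul_exp_cubic hs]
    exact pow_mul_exp_cubic_le_of_le hs hi
  have hpointwise : ∀ᵐ s : ℝ ∂volume.restrict (Ioi 0),
      Tendsto (fun i ↦ (s : ℂ) ^ n * Complex.exp (-(s : ℂ) ^ 3 / 3 - f i * s)) l (𝓝 0) := by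
    filter_upwards [ae_restrict_mem measurableSet_Ioi] with s (hs : 0 < s)
    rw [tendsto_zero_iff_norm_tendsto_zero]
    simp only [norm_pow_mul_exp_cubic hs]
    have hexponent : Tendsto (fun i ↦ -s ^ 3 / 3 - (f i).re * s) l atBot := by
      simpa only [sub_eq_add_neg, Function.comp_def] using
        tendsto_atBot_add_const_left l (-s ^ 3 / 3)
          (tendsto_neg_atTop_atBot.comp (hf.atTop_mul_const hs))
    simpa using (Real.tendsto_exp_atBot.comp hexponent).const_mul (s ^ n)
  simpa [cubicLaplace] using tendsto_integral_filter_of_dominated_convergence _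
    (.of_forall fun i ↦ (continuous_pow_mul_exp_cubic n (f i)).aestronglyMeasurable) hbound
    (integrableOn_pow_mul_rexp_cubic n 0) hpointwise

theorem cubicLaplace_apply_zero (n : ℕ) :
    cubicLaplace n 0 = ((3 ^ (((n : ℝ) - 2) / 3) * Real.Gamma ((n + 1) / 3) : ℝ) : ℂ) := by
  have hn : (-1 : ℝ) < n := neg_one_lt_zero.trans_le n.cast_nonneg
  have hpow : ((1 : ℝ) / 3) ^ (-((n : ℝ) + 1) / 3) * (1 / 3) = 3 ^ (((n : ℝ) - 2) / 3) := by
    rw [one_div, Real.inv_rpow (by norm_num), ← Real.rpow_neg (by norm_num),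
      ← Real.rpow_neg_one 3, ← Real.rpow_add (by norm_num)]
    ring_nf
  rw [← hpow, ← integral_rpow_mul_exp_neg_mul_rpow (by norm_num) hn (by norm_num), cubicLaplace,
    ← integral_complex_ofReal]
  refine setIntegral_congr_fun measurableSet_Ioi fun s _ ↦ ?_
  have hcubic : -(s : ℂ) ^ 3 / 3 = -(1 / 3) * (s : ℂ) ^ 3 := by ring
  have hrpow : s ^ (3 : ℝ) = s ^ 3 := by exact_mod_cast Real.rpow_natCast s 3
  simp only [hrpow, Real.rpow_natCast, hcubic, zero_mul, sub_zero]
  push_cast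
  rfl

end CubicLaplace

/-! ### Airy functions -/

section Airy

variable {w w' Ai Bi : ℂ → ℂ} {w0 w0' : ℝ}

theorem IsAiry.isSolutionOn (hw : IsAiry w w0 w0') : IsSolutionOn id w (deriv w) univ where
  hasDerivAt z _ := (hw.1 z).hasDerivAt
  hasDerivAt_deriv z _ := hw.2.2.1 z ▸ (hw.2.1 z).hasDerivAt

theorem IsSolutionOn.eq_zero_of_airy (hw : IsSolutionOn id w w' univ) {z₀ : ℂ}
    (h0 : w z₀ = 0) (h0' : w' z₀ = 0) (z : ℂ) : w z = 0 :=
  hw.eqOn_zero convex_univ continuousOn_id (mem_univ z₀) h0 h0' (mem_univ z)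

theorem IsAiry.eq_of_initial_values {v v' : ℂ → ℂ} (hw : IsAiry w w0 w0')
    (hv : IsSolutionOn id v v' univ) (hv0 : v 0 = w0) (hv0' : v' 0 = w0') : v = w := by
  have hdiff := hv.const_mul_sub_const_mul hw.isSolutionOn 1 1
  obtain ⟨-, -, -, hw0, hw0'⟩ := hw
  funext z
  simpa [sub_eq_zero] using
    hdiff.eq_zero_of_airy (z₀ := 0) (by simp [hv0, hw0]) (by simp [hv0', hw0']) z

theorem IsSolutionOn.conj_conj (hw : IsSolutionOn id w w' univ) :
    IsSolutionOn id (fun z ↦ conj (w (conj z))) (fun z ↦ conj (w' (conj z))) univ where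
  hasDerivAt z _ := hasDerivAt_conj_conj_iff.2 (by simpa using hw.hasDerivAt (conj z) (mem_univ _))
  hasDerivAt_deriv z _ := hasDerivAt_conj_conj_iff.2
    (by simpa using hw.hasDerivAt_deriv (conj z) (mem_univ _))

theorem IsAiry.map_conj (hw : IsAiry w w0 w0') (z : ℂ) : w (conj z) = conj (w z) := by
  obtain ⟨-, -, -, hw0, hw0'⟩ := id hw
  have hconj := hw.eq_of_initial_values hw.isSolutionOn.conj_conj (by simp [hw0]) (by simp [hw0'])
  simpa using (congrFun hconj (conj z)).symm

theorem wronskian_Ai_Bi_ne_zero (hAi : IsAiryAi Ai) (hBi : IsAiryBi Bi) (z : ℂ) :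
    Ai z * deriv Bi z - deriv Ai z * Bi z ≠ 0 := by
  rw [hAi.isSolutionOn.wronskian_eq hBi.isSolutionOn convex_univ (mem_univ z) (mem_univ 0)]
  obtain ⟨-, -, -, hA, hA'⟩ := hAi
  obtain ⟨-, -, -, hB, hB'⟩ := hBi
  have : 0 < Real.Gamma (1 / 3) := Real.Gamma_pos_of_pos (by norm_num)
  have : 0 < Real.Gamma (2 / 3) := Real.Gamma_pos_of_pos (by norm_num)
  rw [hA, hA', hB, hB', neg_div (Real.Gamma (1 / 3)), ofReal_neg, neg_mul, sub_neg_eq_add]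
  norm_cast
  positivity

/-- The sixth root of unity `exp (iπ/3)`. -/
def sixthRoot : ℂ := ⟨1 / 2, √3 / 2⟩

theorem conj_sixthRoot : conj sixthRoot = 1 - sixthRoot := by
  apply Complex.ext <;> norm_num [sixthRoot]

theorem sixthRoot_sq : sixthRoot ^ 2 = sixthRoot - 1 := by
  have hsqrt : √3 * √3 = 3 := Real.mul_self_sqrt (by norm_num)
  apply Complex.ext <;> simp [sixthRoot, sq] <;> linarith

theorem sixthRoot_pow_three : sixthRoot ^ 3 = -1 := by
  linear_combination (sixthRoot + 1) * sixthRoot_sq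

theorem sixthRoot_sub_conj : sixthRoot - conj sixthRoot = √3 * I := by
  rw [sub_conj, sixthRoot, mul_div_cancel₀ _ two_ne_zero]

theorem hasDerivAt_const_mul_cubicLaplace_zero (c z : ℂ) :
    HasDerivAt (fun z ↦ c * cubicLaplace 0 (c * z)) (-(c ^ 2 * cubicLaplace 1 (c * z))) z :=
  ((hasDerivAt_cubicLaplace_const_mul 0 c z).const_mul c).congr_deriv (by ring)

/-- The inhomogeneity `-1` does not depend on `c`, so that the difference over two cube roots `c` of
`-1` solves the Airy equation. -/
theorem hasDerivAt_deriv_const_mul_cubicLaplace_zero {c : ℂ} (hc : c ^ 3 = -1) (z : ℂ) :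
    HasDerivAt (fun z ↦ -(c ^ 2 * cubicLaplace 1 (c * z)))
      (z * (c * cubicLaplace 0 (c * z)) - 1) z :=
  ((hasDerivAt_cubicLaplace_const_mul 1 c z).const_mul (c ^ 2)).neg.congr_deriv <| by
    linear_combination cubicLaplace 2 (c * z) * hc -
      cubicLaplace_two_add_mul_cubicLaplace_zero (c * z)

/-- The integral of `exp (s³/3 - z s)` along the contour from `∞ exp (-iπ/3)` to `∞ exp (iπ/3)`
through the origin; it equals `2πi Ai(z)`. -/
def airyContour (z : ℂ) : ℂ :=
  sixthRoot * cubicLaplace 0 (sixthRoot * z) -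
    conj sixthRoot * cubicLaplace 0 (conj sixthRoot * z)

/-- The derivative of `airyContour`. -/
def airyContourDeriv (z : ℂ) : ℂ :=
  -(sixthRoot ^ 2 * cubicLaplace 1 (sixthRoot * z)) -
    -(conj sixthRoot ^ 2 * cubicLaplace 1 (conj sixthRoot * z))

theorem isSolutionOn_airyContour : IsSolutionOn id airyContour airyContourDeriv univ where
  hasDerivAt z _ := (hasDerivAt_const_mul_cubicLaplace_zero _ z).sub
    (hasDerivAt_const_mul_cubicLaplace_zero _ z)
  hasDerivAt_deriv z _ := by
    have hconj : conj sixthRoot ^ 3 = -1 := by rw [← map_pow, sixthRoot_pow_three]; simp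
    refine ((hasDerivAt_deriv_const_mul_cubicLaplace_zero sixthRoot_pow_three z).sub
      (hasDerivAt_deriv_const_mul_cubicLaplace_zero hconj z)).congr_deriv ?_
    simp only [airyContour, id]
    ring

theorem sqrt_three_mul_Gamma_mul_Gamma :
    √3 * (Real.Gamma (1 / 3) * Real.Gamma (2 / 3)) = 2 * π := by
  have h := Real.Gamma_mul_Gamma_one_sub (1 / 3)
  have hsqrt : √3 ≠ 0 := by positivity
  rw [mul_one_div, Real.sin_pi_div_three, show (1 : ℝ) - 1 / 3 = 2 / 3 by norm_num] at h
  rw [h]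
  field_simp

theorem airyContour_apply_zero (hAi : IsAiryAi Ai) : airyContour 0 = 2 * π * I * Ai 0 := by
  have hGamma : Real.Gamma (2 / 3) ≠ 0 := (Real.Gamma_pos_of_pos (by norm_num)).ne'
  have hreal : √3 * (3 ^ (-(2 : ℝ) / 3) * Real.Gamma (1 / 3)) =
      2 * π * (3 ^ (-(2 : ℝ) / 3) / Real.Gamma (2 / 3)) := by
    rw [← sqrt_three_mul_Gamma_mul_Gamma]
    field_simp
  have hL : cubicLaplace 0 0 = ((3 ^ (-(2 : ℝ) / 3) * Real.Gamma (1 / 3) : ℝ) : ℂ) := by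
    rw [cubicLaplace_apply_zero]; norm_num
  obtain ⟨-, -, -, hA, -⟩ := hAi
  have hcomplex := congrArg ofReal hreal
  rw [ofReal_mul, ← hL, ofReal_mul, ← hA] at hcomplex
  push_cast at hcomplex
  simp only [airyContour, mul_zero]
  linear_combination cubicLaplace 0 0 * sixthRoot_sub_conj + I * hcomplex

theorem airyContourDeriv_apply_zero (hAi : IsAiryAi Ai) :
    airyContourDeriv 0 = 2 * π * I * deriv Ai 0 := by
  have hGamma : Real.Gamma (1 / 3) ≠ 0 := (Real.Gamma_pos_of_pos (by norm_num)).ne'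
  have hreal : -(√3 * (3 ^ (-(1 : ℝ) / 3) * Real.Gamma (2 / 3))) =
      2 * π * (-(3 ^ (-(1 : ℝ) / 3)) / Real.Gamma (1 / 3)) := by
    rw [← sqrt_three_mul_Gamma_mul_Gamma]
    field_simp
  have hL : cubicLaplace 1 0 = ((3 ^ (-(1 : ℝ) / 3) * Real.Gamma (2 / 3) : ℝ) : ℂ) := by
    rw [cubicLaplace_apply_zero]; norm_num
  obtain ⟨-, -, -, -, hA'⟩ := hAi
  have hcomplex := congrArg ofReal hreal
  rw [ofReal_neg, ofReal_mul, ← hL, ofReal_mul, ← hA'] at hcomplex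
  push_cast at hcomplex
  have hsq : sixthRoot ^ 2 - conj sixthRoot ^ 2 = √3 * I := by
    rw [← sixthRoot_sub_conj, conj_sixthRoot]; ring
  simp only [airyContourDeriv, mul_zero]
  linear_combination -cubicLaplace 1 0 * hsq + I * hcomplex

theorem airyContour_eq (hAi : IsAiryAi Ai) (z : ℂ) : airyContour z = 2 * π * I * Ai z := by
  have hdiff := isSolutionOn_airyContour.const_mul_sub_const_mul hAi.isSolutionOn 1 (2 * π * I)
  simpa [sub_eq_zero] using hdiff.eq_zero_of_airy (z₀ := 0)
    (by simp [airyContour_apply_zero hAi]) (by simp [airyContourDeriv_apply_zero hAi]) z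

theorem airyContourDeriv_eq (hAi : IsAiryAi Ai) (z : ℂ) :
    airyContourDeriv z = 2 * π * I * deriv Ai z := by
  have hderiv := isSolutionOn_airyContour.hasDerivAt z (mem_univ z)
  rw [funext (airyContour_eq hAi)] at hderiv
  exact hderiv.unique ((hAi.1 z).hasDerivAt.const_mul _)

theorem tendsto_cubicLaplace_mul_add_ofReal {n : ℕ} {c : ℂ} (hc : 0 < c.re) (z : ℂ) :
    Tendsto (fun t : ℝ ↦ cubicLaplace n (c * (z + t))) atTop (𝓝 0) := by
  refine tendsto_cubicLaplace_zero ?_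
  simpa only [mul_add, add_re, re_mul_ofReal, id] using
    tendsto_atTop_add_const_left atTop (c * z).re (tendsto_id.const_mul_atTop hc)

theorem sixthRoot_re_pos : 0 < sixthRoot.re := by
  norm_num [sixthRoot]

theorem tendsto_Ai_add_ofReal (hAi : IsAiryAi Ai) (z : ℂ) :
    Tendsto (fun t : ℝ ↦ Ai (z + t)) atTop (𝓝 0) := by
  have hcontour : Tendsto (fun t : ℝ ↦ airyContour (z + t)) atTop (𝓝 0) := by
    simpa [airyContour] using
      ((tendsto_cubicLaplace_mul_add_ofReal sixthRoot_re_pos z).const_mul sixthRoot).sub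
        ((tendsto_cubicLaplace_mul_add_ofReal (c := conj sixthRoot)
          (conj_re _ ▸ sixthRoot_re_pos) z).const_mul (conj sixthRoot))
  simpa only [airyContour_eq hAi, inv_mul_cancel_left₀ two_pi_I_ne_zero, mul_zero] using
    hcontour.const_mul (2 * π * I)⁻¹

theorem tendsto_deriv_Ai_add_ofReal (hAi : IsAiryAi Ai) (z : ℂ) :
    Tendsto (fun t : ℝ ↦ deriv Ai (z + t)) atTop (𝓝 0) := by
  have hcontour : Tendsto (fun t : ℝ ↦ airyContourDeriv (z + t)) atTop (𝓝 0) := by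
    simpa [airyContourDeriv] using
      ((tendsto_cubicLaplace_mul_add_ofReal sixthRoot_re_pos z).const_mul (sixthRoot ^ 2)).neg.sub
        ((tendsto_cubicLaplace_mul_add_ofReal (c := conj sixthRoot)
          (conj_re _ ▸ sixthRoot_re_pos) z).const_mul (conj sixthRoot ^ 2)).neg
  simpa only [airyContourDeriv_eq hAi, inv_mul_cancel_left₀ two_pi_I_ne_zero, mul_zero] using
    hcontour.const_mul (2 * π * I)⁻¹

theorem Ai_ne_zero_of_im_pos (hAi : IsAiryAi Ai) {z : ℂ} (hz : 0 < z.im) : Ai z ≠ 0 := by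
  intro hzero
  have hγ (t : ℝ) : HasDerivAt (fun t : ℝ ↦ z + t) 1 t := ofRealCLM.hasDerivAt.const_add z
  have hray := (hAi.isSolutionOn.comp_of_hasDerivAt_const hγ).mono (subset_univ (Ici 0))
  have hray_zero := hray.eqOn_zero_of_tendsto_zero (by simpa using fun _ _ ↦ hz) (by simp [hzero])
    (tendsto_Ai_add_ofReal hAi z) (by simpa using tendsto_deriv_Ai_add_ofReal hAi z)
  have hderiv : deriv Ai z = 0 := by
    simpa using hray.eqOn_deriv_zero (uniqueDiffOn_Ici 0) hray_zero self_mem_Ici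
  have hAi0 := hAi.isSolutionOn.eq_zero_of_airy hzero hderiv 0
  have : 0 < Real.Gamma (2 / 3) := Real.Gamma_pos_of_pos (by norm_num)
  obtain ⟨-, -, -, hA, -⟩ := hAi
  rw [hA, ofReal_eq_zero] at hAi0
  exact absurd hAi0 (by positivity)

theorem Ai_ne_zero_of_im_ne_zero (hAi : IsAiryAi Ai) {z : ℂ} (hz : z.im ≠ 0) : Ai z ≠ 0 := by
  rcases hz.lt_or_gt with hneg | hpos
  · have hconj : Ai (conj z) ≠ 0 := Ai_ne_zero_of_im_pos hAi (by simpa using hneg)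
    rwa [hAi.map_conj, map_ne_zero] at hconj
  · exact Ai_ne_zero_of_im_pos hAi hpos

end Airy

/-! ### Eigenvalues of the model operator -/

section ModelOperator

variable {w w' Ai Bi : ℂ → ℂ} {ε : ℝ} {k lam : ℂ}

/-- The coefficient `ε (i x - λ)` of the equation `-ε⁻¹ y'' + i x y = λ y` put into the form
`y'' = q y`. -/
def modelCoeff (ε : ℝ) (lam : ℂ) (x : ℝ) : ℂ := ε * (I * x - lam)

theorem continuous_modelCoeff (ε : ℝ) (lam : ℂ) : Continuous (modelCoeff ε lam) := by
  unfold modelCoeff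
  fun_prop

theorem model_equation_iff (hε : ε ≠ 0) {x : ℝ} {y y'' : ℂ} :
    -(ε⁻¹ : ℂ) * y'' + I * x * y = lam * y ↔ y'' = modelCoeff ε lam x * y := by
  have hε' : (ε : ℂ) ≠ 0 := ofReal_ne_zero.2 hε
  unfold modelCoeff
  constructor <;> intro h
  · field_simp at h
    linear_combination -h
  · rw [h]
    field_simp
    ring

theorem IsModelEigenvalue.exists_isSolutionOn (hlam : IsModelEigenvalue ε lam) (hε : ε ≠ 0) :
    ∃ y y' : ℝ → ℂ, IsSolutionOn (modelCoeff ε lam) y y' (Icc (-1) 1) ∧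
      (∃ x ∈ Icc (-1 : ℝ) 1, y x ≠ 0) ∧ y (-1) = 0 ∧ y 1 = 0 := by
  obtain ⟨y, hy, hne, hode, hleft, hright⟩ := hlam
  obtain ⟨hdiff, -, hy'⟩ := contDiff_succ_iff_deriv.1 (one_add_one_eq_two (R := WithTop ℕ∞) ▸ hy)
  have hode_Icc : EqOn (deriv (deriv y)) (fun x ↦ modelCoeff ε lam x * y x) (Icc (-1) 1) := by
    have hode_Ioo : EqOn (deriv (deriv y)) (fun x ↦ modelCoeff ε lam x * y x) (Ioo (-1) 1) :=
      fun x hx ↦ (model_equation_iff hε).1 (hode x hx)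
    rw [← closure_Ioo (by norm_num)]
    exact hode_Ioo.closure (hy'.continuous_deriv le_rfl)
      ((continuous_modelCoeff ε lam).mul hy.continuous)
  exact ⟨y, deriv y, ⟨fun x _ ↦ (hdiff x).hasDerivAt, fun x hx ↦
    (hy'.differentiable one_ne_zero x).hasDerivAt.congr_deriv (hode_Icc hx)⟩, hne, hleft, hright⟩

theorem IsSolutionOn.isModelEigenvalue {y y' : ℝ → ℂ}
    (hy : IsSolutionOn (modelCoeff ε lam) y y' univ) (hε : ε ≠ 0)
    (hne : ∃ x ∈ Icc (-1 : ℝ) 1, y x ≠ 0) (hleft : y (-1) = 0) (hright : y 1 = 0) :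
    IsModelEigenvalue ε lam := by
  have hderiv : deriv y = y' := funext fun x ↦ (hy.hasDerivAt x (mem_univ x)).deriv
  have hderiv2 : deriv y' = fun x ↦ modelCoeff ε lam x * y x :=
    funext fun x ↦ (hy.hasDerivAt_deriv x (mem_univ x)).deriv
  have hdiff : Differentiable ℝ y := fun x ↦ (hy.hasDerivAt x (mem_univ x)).differentiableAt
  have hdiff' : Differentiable ℝ y' :=
    fun x ↦ (hy.hasDerivAt_deriv x (mem_univ x)).differentiableAt
  have hC1 : ContDiff ℝ 1 (deriv y) := by
    rw [contDiff_one_iff_deriv, hderiv, hderiv2]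
    exact ⟨hdiff', (continuous_modelCoeff ε lam).mul hdiff.continuous⟩
  refine ⟨y, ?_, hne, fun x _ ↦ ?_, hleft, hright⟩
  · rw [← one_add_one_eq_two]
    exact contDiff_succ_iff_deriv.2 ⟨hdiff, by simp, hC1⟩
  · rw [model_equation_iff hε, hderiv, hderiv2]

theorem IsSolutionOn.comp_const_mul_sub (hw : IsSolutionOn id w w' univ) (hk : k ^ 3 = ε)
    (lam : ℂ) :
    IsSolutionOn (modelCoeff ε lam) (fun x : ℝ ↦ w (k * (lam - I * x)))
      (fun x : ℝ ↦ -(k * I) * w' (k * (lam - I * x))) univ := by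
  have hpath (x : ℝ) : HasDerivAt (fun x : ℝ ↦ k * (lam - I * x)) (-(k * I)) x :=
    (((ofRealCLM.hasDerivAt.const_mul I).const_sub lam).const_mul k).congr_deriv (by simp)
  refine (hw.comp_of_hasDerivAt_const hpath).congr_coeff fun x _ ↦ ?_
  simp only [modelCoeff, id, smul_eq_mul, ← hk]
  linear_combination k ^ 3 * (lam - I * x) * I_sq

/-- The hypotheses on `w` say that `x ↦ w (k (λ - i x))` is a nonzero solution of the eigenvalue
equation satisfying the boundary condition at `x = 1`. -/
theorem isModelEigenvalue_iff_of_airy_eq_zero (hw : IsSolutionOn id w w' univ) (hε : ε ≠ 0)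
    (hk : k ^ 3 = ε) (hw0 : w (k * (lam - I)) = 0) (hw0' : w' (k * (lam - I)) ≠ 0) :
    IsModelEigenvalue ε lam ↔ w (k * (lam + I)) = 0 := by
  have hpath := hw.comp_const_mul_sub hk lam
  have hmem_left : (-1 : ℝ) ∈ Icc (-1 : ℝ) 1 := left_mem_Icc.2 (by norm_num)
  have hmem_right : (1 : ℝ) ∈ Icc (-1 : ℝ) 1 := right_mem_Icc.2 (by norm_num)
  constructor
  · intro hlam
    obtain ⟨y, y', hy, ⟨x, hx, hyx⟩, hleft, hright⟩ := hlam.exists_isSolutionOn hε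
    have hy'_left : y' (-1) ≠ 0 := fun h0' ↦ hyx <|
      hy.eqOn_zero (convex_Icc _ _) (continuous_modelCoeff ε lam).continuousOn hmem_left hleft
        h0' hx
    have hwronskian := hy.wronskian_eq (hpath.mono (subset_univ _)) (convex_Icc _ _)
      hmem_left hmem_right
    simpa [hleft, hright, hw0, hy'_left] using hwronskian
  · intro hleft
    refine hpath.isModelEigenvalue hε ?_ (by simpa using hleft) (by simpa using hw0)
    by_contra! hzero
    have hk0 : k ≠ 0 := by
      rintro rfl
      exact hε (by simpa using hk.symm)
    have hderiv_zero := (hpath.mono (subset_univ _)).eqOn_deriv_zero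
      (uniqueDiffOn_Icc (by norm_num)) hzero hmem_right
    simp [hk0, hw0'] at hderiv_zero

theorem isModelEigenvalue_iff_Ai_mul_Bi_eq (hAi : IsAiryAi Ai) (hBi : IsAiryBi Bi) (hε : ε ≠ 0)
    (hk : k ^ 3 = ε) :
    IsModelEigenvalue ε lam ↔
      Ai (k * (lam - I)) * Bi (k * (lam + I)) = Bi (k * (lam - I)) * Ai (k * (lam + I)) := by
  set ξ := k * (lam - I)
  have hw := hAi.isSolutionOn.const_mul_sub_const_mul hBi.isSolutionOn (Bi ξ) (Ai ξ)
  have hw0' : Bi ξ * deriv Ai ξ - Ai ξ * deriv Bi ξ ≠ 0 := fun h ↦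
    wronskian_Ai_Bi_ne_zero hAi hBi ξ (by linear_combination -h)
  rw [isModelEigenvalue_iff_of_airy_eq_zero hw hε hk (by ring) hw0', sub_eq_zero, eq_comm]

end ModelOperator

theorem mul_conj_eq_mul_conj_iff_exists_ofReal {p q : ℂ} (hp : p ≠ 0) :
    p * conj q = q * conj p ↔ ∃ a : ℝ, (a : ℂ) * p + q = 0 := by
  have hreal : p * conj q = q * conj p ↔ conj (q / p) = q / p := by
    rw [map_div₀, div_eq_div_iff (by simpa using hp) hp, mul_comm]
  rw [hreal, conj_eq_iff_real]
  constructor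
  · rintro ⟨r, hr⟩
    exact ⟨-r, by rw [ofReal_neg, ← hr]; field_simp; ring⟩
  · rintro ⟨a, ha⟩
    exact ⟨-a, by rw [div_eq_iff hp, ofReal_neg]; linear_combination ha⟩

/-- A real number `λ` is an eigenvalue of the model operator `T(ε)` iff the point
`ξ = ε^{1/3}(λ − i)` is a zero of a real solution `V_a = a·Ai + Bi` of the Airy equation:
the real spectral locus is parametrized by the complex zeros of real Airy solutions. -/
theorem real_spectral_locus_via_real_airy_solutions (Ai Bi : ℂ → ℂ)
    (hAi : IsAiryAi Ai) (hBi : IsAiryBi Bi)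
    (ε : ℝ) (hε : 0 < ε) (lam : ℝ) :
    IsModelEigenvalue ε (lam : ℂ) ↔
      ∃ a : ℝ, (a : ℂ) * Ai (((ε ^ ((1:ℝ)/3) : ℝ) : ℂ) * ((lam : ℂ) - Complex.I))
        + Bi (((ε ^ ((1:ℝ)/3) : ℝ) : ℂ) * ((lam : ℂ) - Complex.I)) = 0 := by
  set k : ℝ := ε ^ ((1 : ℝ) / 3)
  set ξ : ℂ := (k : ℂ) * (lam - I) with hξ
  have hk_pos : 0 < k := Real.rpow_pos_of_pos hε _
  have hk : (k : ℂ) ^ 3 = ε := by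
    rw [← ofReal_pow, ← Real.rpow_natCast, ← Real.rpow_mul hε.le]
    norm_num
  have hconj : (k : ℂ) * (lam + I) = conj ξ := by simp [hξ]
  have hAiξ : Ai ξ ≠ 0 := Ai_ne_zero_of_im_ne_zero hAi (by simpa [hξ] using hk_pos.ne')
  rw [isModelEigenvalue_iff_Ai_mul_Bi_eq hAi hBi hε.ne' hk, hconj, hAi.map_conj, hBi.map_conj,
    mul_conj_eq_mul_conj_iff_exists_ofReal hAiξ]
end
end
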